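/- arXiv:2010.11022 — 3 statements merged into one kernel-verified Lean document; each statement's English description precedes it below -/
import Mathlib

section
/- Let R be a commutative ring with a non-zero-divisor π such that R is π-adically complete and separated, and write R_0 = R/πR. Then base change along R → R_0 induces an equivalence from finite étale R-algebras to finite étale R_0-algebras; concretely: (i) for finite étale R-algebras B and C, the reduction map from R-algebra homomorphisms B → C to R_0-algebra homomorphisms B ⊗_R R_0 → C ⊗_R R_0 is bijective, and (ii) every finite étale R_0-algebra is isomorphic to B ⊗_R R_0 for some finite étale R-algebra B. (Proposition 2.5(2).) -/
open scoped TensorProduct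

/-!
Let `R` be complete along an ideal `I`. A homomorphism `B → C` of finite étale algebras lifts
uniquely from its reduction because `B` is formally étale and `C`, being finite projective over `R`,
is `I`-adically complete.

To lift a finite étale `R ⧸ I`-algebra `B₀`, lift the coefficients of a submersive presentation and
invert the Jacobian: this gives a smooth `R`-algebra `S` that reduces to `B₀` but need not be
finite. On the other hand `B₀` is a finite projective `R ⧸ I`-module, so by lifting idempotent
matrices it is also the reduction of a finite projective `R`-module `P`. The identification of the
two reductions lifts to a linear map `P → S`, which is an isomorphism modulo every power of `I`
because `S` is flat. Hence `P` is the completion of `S`, so this completion is a finite projective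
`R`-algebra; it reduces to `B₀`, and it is unramified by Nakayama's lemma for its differentials.
-/

section AdicCompleteness

variable {R : Type*} [CommRing R] (I : Ideal R)

theorem mem_smul_top_iff_one_tmul_eq_zero {M : Type*} [AddCommGroup M] [Module R M] {x : M} :
    x ∈ (I • ⊤ : Submodule R M) ↔ (1 : R ⧸ I) ⊗ₜ[R] x = 0 := by
  rw [← (TensorProduct.quotTensorEquivQuotSMul M I).map_eq_zero_iff,
    TensorProduct.quotTensorEquivQuotSMul_mk_one_tmul, Submodule.Quotient.mk_eq_zero]

theorem isAdicComplete_pi {ι : Type*} [Finite ι] (M : ι → Type*) [∀ i, AddCommGroup (M i)]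
    [∀ i, Module R (M i)] [∀ i, IsAdicComplete I (M i)] : IsAdicComplete I (∀ i, M i) := by
  classical
  cases nonempty_fintype ι
  rw [← AdicCompletion.of_bijective_iff,
    ← (AdicCompletion.piEquivOfFintype I M).bijective.of_comp_iff']
  convert! (LinearEquiv.piCongrRight fun i ↦ AdicCompletion.ofLinearEquiv I (M i)).bijective using 1

theorem isAdicComplete_of_leftInverse {M N : Type*} [AddCommGroup M] [Module R M] [AddCommGroup N]
    [Module R N] [IsAdicComplete I M] (i : N →ₗ[R] M) (r : M →ₗ[R] N)
    (h : Function.LeftInverse r i) : IsAdicComplete I N := by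
  have h_comp : r ∘ₗ i = LinearMap.id := LinearMap.ext h
  refine AdicCompletion.of_bijective_iff.mp ⟨fun x y hxy ↦ h.injective ?_, fun x ↦ ?_⟩
  · apply AdicCompletion.of_injective I M
    simpa only [AdicCompletion.map_of] using congr(AdicCompletion.map I i $hxy)
  · obtain ⟨y, hy⟩ := AdicCompletion.of_surjective I M (AdicCompletion.map I i x)
    refine ⟨r y, ?_⟩
    rw [← AdicCompletion.map_of, hy, AdicCompletion.map_comp_apply, h_comp, AdicCompletion.map_id,
      LinearMap.id_apply]

theorem isAdicComplete_of_finite_projective (M : Type*) [AddCommGroup M] [Module R M]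
    [IsAdicComplete I R] [Module.Finite R M] [Module.Projective R M] : IsAdicComplete I M := by
  obtain ⟨n, r, hr⟩ := Module.Finite.exists_fin' R M
  obtain ⟨i, hi⟩ := Module.projective_lifting_property r LinearMap.id hr
  have : IsAdicComplete I (Fin n → R) := isAdicComplete_pi I fun _ ↦ R
  exact isAdicComplete_of_leftInverse I i r (LinearMap.congr_fun hi)

end AdicCompleteness

section IdempotentLifting

variable {R A : Type*} [CommRing R] [Ring A] [Algebra R A]

theorem mul_mem_mul_smul_top {J K : Ideal R} {x y : A} (hx : x ∈ (J • ⊤ : Submodule R A))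
    (hy : y ∈ (K • ⊤ : Submodule R A)) : x * y ∈ ((J * K) • ⊤ : Submodule R A) := by
  induction hx using Submodule.smul_induction_on' with
  | smul r hr a _ =>
    have hay : a * y ∈ (K • ⊤ : Submodule R A) :=
      Submodule.smul_top_le_comap_smul_top K (LinearMap.mulLeft R a) hy
    rw [smul_mul_assoc, mul_smul]
    exact Submodule.smul_mem_smul hr hay
  | add a _ b _ ha hb => exact add_mul a b y ▸ add_mem ha hb

/-- One step of Newton's method for the equation `x ^ 2 = x`. -/
def idempotentNewton (x : A) : A := 3 * x ^ 2 - 2 * x ^ 3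

theorem idempotentNewton_sub_self (x : A) :
    idempotentNewton x - x = (x * x - x) * (1 - 2 * x) := by
  unfold idempotentNewton; noncomm_ring

theorem idempotentNewton_mul_self_sub (x : A) :
    idempotentNewton x * idempotentNewton x - idempotentNewton x =
      (x * x - x) * (x * x - x) * (4 * (x * x - x) - 3) := by
  unfold idempotentNewton; noncomm_ring

variable (I : Ideal R)

theorem iterate_idempotentNewton_mul_self_sub_mem {a : A}
    (ha : a * a - a ∈ (I • ⊤ : Submodule R A)) (n : ℕ) :
    idempotentNewton^[n] a * idempotentNewton^[n] a - idempotentNewton^[n] a ∈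
      (I ^ (n + 1) • ⊤ : Submodule R A) := by
  induction n with
  | zero => simpa using ha
  | succ n ih =>
    rw [Function.iterate_succ_apply', idempotentNewton_mul_self_sub]
    refine Submodule.smul_top_le_comap_smul_top _ (LinearMap.mulRight R _) ?_
    refine Submodule.smul_mono_left ?_ (mul_mem_mul_smul_top ih ih)
    rw [← pow_add]
    exact Ideal.pow_le_pow_right (by lia)

theorem exists_isIdempotentElem_sub_mem [IsAdicComplete I A] {a : A}
    (ha : a * a - a ∈ (I • ⊤ : Submodule R A)) :
    ∃ e : A, IsIdempotentElem e ∧ e - a ∈ (I • ⊤ : Submodule R A) := by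
  set x : ℕ → A := fun n ↦ idempotentNewton^[n] a with hx
  have hx_idem (n : ℕ) : x n * x n - x n ∈ (I ^ (n + 1) • ⊤ : Submodule R A) :=
    iterate_idempotentNewton_mul_self_sub_mem I ha n
  have hx_succ (n : ℕ) : x (n + 1) - x n ∈ (I ^ (n + 1) • ⊤ : Submodule R A) := by
    simp only [hx, Function.iterate_succ_apply', idempotentNewton_sub_self]
    exact Submodule.smul_top_le_comap_smul_top _ (LinearMap.mulRight R _) (hx_idem n)
  have h_le (n : ℕ) : (I ^ (n + 1) • ⊤ : Submodule R A) ≤ I ^ n • ⊤ :=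
    Submodule.smul_mono_left (Ideal.pow_le_pow_right n.le_succ)
  let c : AdicCompletion.AdicCauchySequence I A := .mk I A x fun n ↦
    (SModEq.sub_mem.mpr (h_le n (hx_succ n))).symm
  obtain ⟨e, he⟩ := IsPrecomplete.prec' (I := I) (M := A) c c.2
  simp only [SModEq.sub_mem] at he
  change ∀ n, x n - e ∈ _ at he
  refine ⟨e, ?_, ?_⟩
  · refine sub_eq_zero.mp (IsHausdorff.haus' (I := I) _ fun n ↦ ?_)
    rw [SModEq.zero]
    have h_expand : e * e - e =
        (x n * x n - x n) - (x n - e) * x n - e * (x n - e) + (x n - e) := by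
      noncomm_ring
    rw [h_expand]
    refine add_mem (sub_mem (sub_mem (h_le n (hx_idem n)) ?_) ?_) (he n)
    · exact Submodule.smul_top_le_comap_smul_top _ (LinearMap.mulRight R _) (he n)
    · exact Submodule.smul_top_le_comap_smul_top _ (LinearMap.mulLeft R _) (he n)
  · have h_expand : e - a = (x 1 - x 0) - (x 1 - e) := by simp [hx]
    rw [h_expand]
    exact sub_mem (by simpa using hx_succ 0) (by simpa using he 1)

end IdempotentLifting

section ProjectiveLift

universe u

variable {R : Type u} [CommRing R] (I : Ideal R)

theorem exists_baseChange_eq {A P N : Type*} [CommRing A] [Algebra R A]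
    (hA : Function.Surjective (algebraMap R A)) [AddCommGroup P] [Module R P]
    [Module.Projective R P] [AddCommGroup N] [Module R N] (φ : A ⊗[R] P →ₗ[A] A ⊗[R] N) :
    ∃ f : P →ₗ[R] N, f.baseChange A = φ := by
  obtain ⟨f, hf⟩ := Module.projective_lifting_property (TensorProduct.mk R A N 1)
    (φ.restrictScalars R ∘ₗ TensorProduct.mk R A P 1) (TensorProduct.mk_surjective R N A hA)
  exact ⟨f, by ext x; exact LinearMap.congr_fun hf x⟩

theorem mem_smul_top_iff_baseChange_eq_zero {F N : Type*} [AddCommGroup F] [Module R F]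
    [Module.Free R F] [Module.Finite R F] [AddCommGroup N] [Module R N] {f : F →ₗ[R] N} :
    f ∈ (I • ⊤ : Submodule R (F →ₗ[R] N)) ↔ f.baseChange (R ⧸ I) = 0 := by
  constructor
  · intro hf
    refine TensorProduct.AlgebraTensorModule.curry_injective <|
      LinearMap.ext_ring <| LinearMap.ext fun x ↦ ?_
    have hfx : f x ∈ (I • ⊤ : Submodule R N) :=
      Submodule.smul_top_le_comap_smul_top I (LinearMap.applyₗ (R := R) x) hf
    simpa using (mem_smul_top_iff_one_tmul_eq_zero I).mp hfx
  · intro hf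
    let b := Module.Free.chooseBasis R F
    have hf_sum : f = ∑ i, (b.coord i).smulRight (f (b i)) := b.ext fun j ↦ by
      classical
      simp [Finsupp.single_apply, ite_smul]
    rw [hf_sum]
    refine Submodule.sum_mem _ fun i _ ↦ ?_
    have hfb : f (b i) ∈ (I • ⊤ : Submodule R N) := by
      rw [mem_smul_top_iff_one_tmul_eq_zero, ← LinearMap.baseChange_tmul, hf, LinearMap.zero_apply]
    exact Submodule.smul_top_le_comap_smul_top I (LinearMap.smulRightₗ (b.coord i)) hfb

theorem exists_isIdempotentElem_baseChange_eq [IsAdicComplete I R] {F : Type*} [AddCommGroup F]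
    [Module R F] [Module.Free R F] [Module.Finite R F]
    {e₀ : Module.End (R ⧸ I) ((R ⧸ I) ⊗[R] F)} (he₀ : IsIdempotentElem e₀) :
    ∃ e : Module.End R F, IsIdempotentElem e ∧ e.baseChange (R ⧸ I) = e₀ := by
  obtain ⟨a, rfl⟩ := exists_baseChange_eq Ideal.Quotient.mk_surjective e₀
  have : IsAdicComplete I (Module.End R F) := isAdicComplete_of_finite_projective I _
  have ha : a * a - a ∈ (I • ⊤ : Submodule R (Module.End R F)) := by
    rw [mem_smul_top_iff_baseChange_eq_zero, LinearMap.baseChange_sub, LinearMap.baseChange_mul]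
    exact sub_eq_zero.mpr he₀
  obtain ⟨e, he, hea⟩ := exists_isIdempotentElem_sub_mem I ha
  refine ⟨e, he, sub_eq_zero.mp ?_⟩
  rw [← LinearMap.baseChange_sub]
  exact (mem_smul_top_iff_baseChange_eq_zero I).mp hea

theorem rangeRestrict_comp_subtype_range {F : Type*} [AddCommGroup F] [Module R F]
    {e : Module.End R F} (he : IsIdempotentElem e) :
    e.rangeRestrict ∘ₗ (LinearMap.range e).subtype = LinearMap.id := by
  ext ⟨_, y, rfl⟩
  exact congr($he y)

theorem nonempty_baseChange_range_equiv {A F M₀ : Type*} [CommRing A] [Algebra R A]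
    [AddCommGroup F] [Module R F] [AddCommGroup M₀] [Module A M₀] {e : Module.End R F}
    (he : IsIdempotentElem e) {q : A ⊗[R] F →ₗ[A] M₀} {s : M₀ →ₗ[A] A ⊗[R] F}
    (hqs : q ∘ₗ s = LinearMap.id) (hsq : e.baseChange A = s ∘ₗ q) :
    Nonempty (A ⊗[R] LinearMap.range e ≃ₗ[A] M₀) := by
  let i := (LinearMap.range e).subtype
  have hpi : e.rangeRestrict ∘ₗ i = LinearMap.id := rangeRestrict_comp_subtype_range he
  refine ⟨.ofLinearMap (q ∘ₗ i.baseChange A) (e.rangeRestrict.baseChange A ∘ₗ s) ?_ ?_⟩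
  · calc (q ∘ₗ i.baseChange A) ∘ₗ e.rangeRestrict.baseChange A ∘ₗ s
      _ = q ∘ₗ (i ∘ₗ e.rangeRestrict).baseChange A ∘ₗ s := by
        simp only [LinearMap.baseChange_comp, LinearMap.comp_assoc]
      _ = (q ∘ₗ s) ∘ₗ (q ∘ₗ s) := by
        rw [LinearMap.subtype_comp_codRestrict, hsq]
        simp only [LinearMap.comp_assoc]
      _ = LinearMap.id := by rw [hqs, LinearMap.id_comp]
  · calc (e.rangeRestrict.baseChange A ∘ₗ s) ∘ₗ q ∘ₗ i.baseChange A
      _ = e.rangeRestrict.baseChange A ∘ₗ (s ∘ₗ q) ∘ₗ i.baseChange A := by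
        simp only [LinearMap.comp_assoc]
      _ = (e.rangeRestrict ∘ₗ i ∘ₗ e.rangeRestrict ∘ₗ i).baseChange A := by
        rw [← hsq]
        simp only [← LinearMap.baseChange_comp]
        rfl
      _ = LinearMap.id := by rw [hpi, LinearMap.comp_id, hpi, LinearMap.baseChange_id]

theorem exists_finite_projective_baseChange_equiv [IsAdicComplete I R] (M₀ : Type*)
    [AddCommGroup M₀] [Module (R ⧸ I) M₀] [Module.Finite (R ⧸ I) M₀]
    [Module.Projective (R ⧸ I) M₀] :
    ∃ (P : Type u) (_ : AddCommGroup P) (_ : Module R P), Module.Finite R P ∧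
      Module.Projective R P ∧ Nonempty ((R ⧸ I) ⊗[R] P ≃ₗ[R ⧸ I] M₀) := by
  obtain ⟨n, q', hq'⟩ := Module.Finite.exists_fin' (R ⧸ I) M₀
  let q := q' ∘ₗ (TensorProduct.piScalarRight R (R ⧸ I) (R ⧸ I) (Fin n)).toLinearMap
  obtain ⟨s, hqs⟩ := Module.projective_lifting_property q LinearMap.id
    (hq'.comp (LinearEquiv.surjective _))
  have hsq : IsIdempotentElem (s ∘ₗ q : Module.End (R ⧸ I) _) := by
    rw [IsIdempotentElem, Module.End.mul_eq_comp, LinearMap.comp_assoc, ← LinearMap.comp_assoc q,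
      hqs, LinearMap.id_comp]
  obtain ⟨e, he, hesq⟩ := exists_isIdempotentElem_baseChange_eq I hsq
  exact ⟨LinearMap.range e, inferInstance, inferInstance, inferInstance,
    .of_split _ _ (rangeRestrict_comp_subtype_range he),
    nonempty_baseChange_range_equiv he hqs hesq⟩

end ProjectiveLift

section LTensor

variable {R : Type*} [CommRing R] (I : Ideal R) {M N : Type*} [AddCommGroup M] [Module R M]
  [AddCommGroup N] [Module R N] {f : M →ₗ[R] N}

theorem lTensor_bijective_of_baseChange_bijective {A T : Type*} [CommRing A] [Algebra R A]
    [AddCommGroup T] [Module R T] [Module A T] [IsScalarTower R A T]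
    (hf : Function.Bijective (f.baseChange A)) : Function.Bijective (f.lTensor T) := by
  have h_comp : (f.baseChange A).lTensor T =
      (TensorProduct.AlgebraTensorModule.cancelBaseChange R A A T N).symm.toLinearMap ∘ₗ
      TensorProduct.AlgebraTensorModule.lTensor A T f ∘ₗ
      (TensorProduct.AlgebraTensorModule.cancelBaseChange R A A T M).toLinearMap := by
    ext
    simp
  have h_bij : Function.Bijective ((f.baseChange A).lTensor T) :=
    (LinearEquiv.lTensor T (.ofBijective _ hf)).bijective
  rw [h_comp, LinearMap.coe_comp, LinearMap.coe_comp] at h_bij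
  exact (Function.Bijective.of_comp_iff _ (LinearEquiv.bijective _)).mp
    ((Function.Bijective.of_comp_iff' (LinearEquiv.bijective _) _).mp h_bij)

theorem lTensor_bijective_of_submodule_of_quotient [Module.Flat R N] {T : Type*} [AddCommGroup T]
    [Module R T] (T' : Submodule R T) (h_sub : Function.Bijective (f.lTensor T'))
    (h_quot : Function.Bijective (f.lTensor (T ⧸ T'))) : Function.Bijective (f.lTensor T) := by
  have h_sub_comm : T'.subtype.rTensor N ∘ₗ f.lTensor T' = f.lTensor T ∘ₗ T'.subtype.rTensor M := by
    rw [LinearMap.rTensor_comp_lTensor, LinearMap.lTensor_comp_rTensor]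
  have h_quot_comm : T'.mkQ.rTensor N ∘ₗ f.lTensor T = f.lTensor (T ⧸ T') ∘ₗ T'.mkQ.rTensor M := by
    rw [LinearMap.rTensor_comp_lTensor, LinearMap.lTensor_comp_rTensor]
  have h_exactM := rTensor_exact M (LinearMap.exact_subtype_mkQ T') T'.mkQ_surjective
  have h_exactN := rTensor_exact N (LinearMap.exact_subtype_mkQ T') T'.mkQ_surjective
  have h_injN : Function.Injective (T'.subtype.rTensor N) :=
    Module.Flat.rTensor_preserves_injective_linearMap _ T'.subtype_injective
  refine ⟨(injective_iff_map_eq_zero _).mpr fun x hx ↦ ?_, ?_⟩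
  · have hx_quot : f.lTensor (T ⧸ T') (T'.mkQ.rTensor M x) = 0 := by
      rw [← LinearMap.comp_apply, ← h_quot_comm, LinearMap.comp_apply, hx, map_zero]
    obtain ⟨y, rfl⟩ := (h_exactM x).mp ((map_eq_zero_iff _ h_quot.1).mp hx_quot)
    rw [← LinearMap.comp_apply, ← h_sub_comm, LinearMap.comp_apply, map_eq_zero_iff _ h_injN,
      map_eq_zero_iff _ h_sub.1] at hx
    rw [hx, map_zero]
  · intro y
    obtain ⟨z, hz⟩ := h_quot.2 (T'.mkQ.rTensor N y)
    obtain ⟨x, rfl⟩ := LinearMap.rTensor_surjective M T'.mkQ_surjective z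
    have hyx : T'.mkQ.rTensor N (y - f.lTensor T x) = 0 := by
      rw [map_sub, ← hz, sub_eq_zero]
      exact congr($h_quot_comm x).symm
    obtain ⟨w, hw⟩ := (h_exactN _).mp hyx
    obtain ⟨v, rfl⟩ := h_sub.2 w
    refine ⟨T'.subtype.rTensor M v + x, ?_⟩
    rw [map_add, ← eq_sub_iff_add_eq, ← hw]
    exact congr($h_sub_comm v).symm

theorem lTensor_bijective_of_pow_le_annihilator [Module.Flat R N]
    (hf : Function.Bijective (f.baseChange (R ⧸ I))) (n : ℕ) (T : Type*) [AddCommGroup T]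
    [Module R T] (hT : I ^ n ≤ Module.annihilator R T) : Function.Bijective (f.lTensor T) := by
  induction n generalizing T with
  | zero =>
    have : Subsingleton T := by
      rwa [pow_zero, Ideal.one_eq_top, top_le_iff, Module.annihilator_eq_top_iff] at hT
    exact ⟨Function.injective_of_subsingleton _, Function.surjective_to_subsingleton _⟩
  | succ n ih =>
    rw [← Submodule.annihilator_top, Submodule.le_annihilator_iff, pow_succ, mul_smul,
      ← Submodule.le_annihilator_iff] at hT
    exact lTensor_bijective_of_submodule_of_quotient (I • ⊤) (ih _ hT)
      (lTensor_bijective_of_baseChange_bijective hf)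

end LTensor

section StandardSmoothLift

universe u

section Jacobian

variable {R R₀ B₀ ι σ : Type*} [CommRing R] [CommRing R₀] [CommRing B₀] [Algebra R₀ B₀]
  [Finite σ] [Algebra R R₀] [Algebra R B₀] [IsScalarTower R R₀ B₀]
  (P : Algebra.SubmersivePresentation R₀ B₀ ι σ) [P.HasCoeffs R]

theorem jacobian_ofHasCoeffs :
    (P.toPreSubmersivePresentation.ofHasCoeffs R).jacobian =
      Ideal.Quotient.mk _ (P.jacobianOfHasCoeffs R) := by
  classical
  cases nonempty_fintype σ
  rw [Algebra.PreSubmersivePresentation.jacobian_eq_jacobiMatrix_det,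
    Algebra.SubmersivePresentation.jacobianOfHasCoeffs]
  convert! rfl

theorem isUnit_one_tmul_jacobian_ofHasCoeffs :
    IsUnit ((1 : R₀) ⊗ₜ[R] (P.toPreSubmersivePresentation.ofHasCoeffs R).jacobian) := by
  have h_unit := P.jacobian_isUnit.map (P.tensorModelOfHasCoeffsEquiv R).symm
  rwa [← P.aeval_jacobianOfHasCoeffs R, P.tensorModelOfHasCoeffsEquiv_symm_tmul,
    ← jacobian_ofHasCoeffs] at h_unit

end Jacobian

theorem isStandardSmooth_of_isLocalizationAway_jacobian {R A ι σ : Type*} [CommRing R] [CommRing A]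
    [Algebra R A] [Finite ι] [Finite σ] (Q : Algebra.PreSubmersivePresentation R A ι σ)
    (S : Type*) [CommRing S] [Algebra R S] [Algebra A S] [IsScalarTower R A S]
    [IsLocalization.Away Q.jacobian S] : Algebra.IsStandardSmooth R S := by
  let N := (Algebra.PreSubmersivePresentation.localizationAway S Q.jacobian).comp Q
  have hN : IsUnit N.jacobian := by
    have hQ : IsUnit (algebraMap A S Q.jacobian) := IsLocalization.Away.algebraMap_isUnit Q.jacobian
    rw [Algebra.PreSubmersivePresentation.comp_jacobian_eq_jacobian_smul_jacobian,
      Algebra.smul_def, Algebra.PreSubmersivePresentation.localizationAway_jacobian]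
    exact hQ.mul hQ
  exact Algebra.SubmersivePresentation.isStandardSmooth ⟨N, hN⟩

theorem exists_isStandardSmooth_tensorProduct_algEquiv {R : Type u} {R₀ B₀ : Type*} [CommRing R]
    [CommRing R₀] [CommRing B₀] [Algebra R R₀] [Algebra R₀ B₀]
    (hR₀ : Function.Surjective (algebraMap R R₀)) [Algebra.IsStandardSmooth R₀ B₀] :
    ∃ (S : Type u) (_ : CommRing S) (_ : Algebra R S),
      Algebra.IsStandardSmooth R S ∧ Nonempty (R₀ ⊗[R] S ≃ₐ[R₀] B₀) := by
  obtain ⟨ι, σ, _, _, ⟨P⟩⟩ := Algebra.IsStandardSmooth.out (R := R₀) (S := B₀)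
  let : Algebra R B₀ := Algebra.compHom B₀ (algebraMap R R₀)
  have : IsScalarTower R R₀ B₀ := .of_algebraMap_eq' rfl
  have : P.HasCoeffs R := ⟨fun x _ ↦ hR₀ x⟩
  let Q := P.toPreSubmersivePresentation.ofHasCoeffs R
  let e := IsLocalization.atUnit (R₀ ⊗[R] P.ModelOfHasCoeffs R)
    (Localization.Away ((1 : R₀) ⊗ₜ[R] Q.jacobian)) _ (isUnit_one_tmul_jacobian_ofHasCoeffs P)
  exact ⟨Localization.Away Q.jacobian, inferInstance, inferInstance,
    isStandardSmooth_of_isLocalizationAway_jacobian Q _,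
    ⟨(IsLocalization.Away.tensorProductEquivTMulRight R R₀ Q.jacobian _).trans <|
      (e.restrictScalars R₀).symm.trans (P.tensorModelOfHasCoeffsEquiv R)⟩⟩

end StandardSmoothLift

section CompletionComparison

variable {R : Type*} [CommRing R] (I : Ideal R) {M N : Type*} [AddCommGroup M] [Module R M]
  [AddCommGroup N] [Module R N] {f : M →ₗ[R] N}

theorem map_mem_smul_top_iff_of_lTensor_injective (hf : Function.Injective (f.lTensor (R ⧸ I)))
    {x : M} : f x ∈ (I • ⊤ : Submodule R N) ↔ x ∈ (I • ⊤ : Submodule R M) := by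
  simp_rw [mem_smul_top_iff_one_tmul_eq_zero]
  rw [← LinearMap.lTensor_tmul, map_eq_zero_iff _ hf]

theorem exists_map_sub_mem_smul_top_of_lTensor_surjective
    (hf : Function.Surjective (f.lTensor (R ⧸ I))) (y : N) :
    ∃ x, f x - y ∈ (I • ⊤ : Submodule R N) := by
  obtain ⟨z, hz⟩ := hf (1 ⊗ₜ y)
  obtain ⟨x, rfl⟩ := TensorProduct.mk_surjective R M (R ⧸ I) Ideal.Quotient.mk_surjective z
  refine ⟨x, ?_⟩
  rw [mem_smul_top_iff_one_tmul_eq_zero, TensorProduct.tmul_sub, sub_eq_zero]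
  exact hz

theorem toAdicCompletion_comp_bijective_of_lTensor_bijective {P S : Type*} [AddCommGroup P]
    [Module R P] [IsAdicComplete I P] [CommRing S] [Algebra R S] {f : P →ₗ[R] S}
    (hf : ∀ n, Function.Bijective (f.lTensor (R ⧸ I ^ n))) :
    Function.Bijective ((IsScalarTower.toAlgHom R S
      (AdicCompletion (I.map (algebraMap R S)) S)).toLinearMap ∘ₗ f) := by
  set J := I.map (algebraMap R S)
  have mem_pow_iff (n : ℕ) {s : S} : s ∈ J ^ n ↔ s ∈ (I ^ n • ⊤ : Submodule R S) := by
    rw [← Ideal.map_pow, Ideal.smul_top_eq_map, Submodule.restrictScalars_mem]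
  have map_mem_iff (n : ℕ) {x : P} : f x ∈ J ^ n ↔ x ∈ (I ^ n • ⊤ : Submodule R P) :=
    (mem_pow_iff n).trans (map_mem_smul_top_iff_of_lTensor_injective _ (hf n).1)
  have eval_eq (x : P) (n : ℕ) :
      AdicCompletion.evalₐ J n (algebraMap S _ (f x)) = Ideal.Quotient.mk _ (f x) :=
    AdicCompletion.evalₐ_of ..
  constructor
  · intro x y hxy
    refine IsHausdorff.eq_iff_smodEq (I := I) |>.mpr fun n ↦ ?_
    rw [SModEq.sub_mem, ← map_mem_iff, map_sub, ← Ideal.Quotient.eq, ← eval_eq, ← eval_eq]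
    exact congr(AdicCompletion.evalₐ J n $hxy)
  · intro z
    obtain ⟨c, rfl⟩ := AdicCompletion.mk_surjective J S z
    choose x hx using fun n ↦
      exists_map_sub_mem_smul_top_of_lTensor_surjective (I ^ n) (hf n).2 (c n)
    simp only [← mem_pow_iff] at hx
    obtain ⟨L, hL⟩ := IsPrecomplete.prec' (I := I) x fun {m n} hmn ↦ by
      have hc : c m - c n ∈ J ^ m := by simpa [SModEq.sub_mem] using c.2 hmn
      rw [SModEq.sub_mem, ← map_mem_iff, map_sub]
      convert sub_mem (add_mem (hx m) hc) (Ideal.pow_le_pow_right hmn (hx n)) using 1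
      abel
    refine ⟨L, AdicCompletion.ext_evalₐ fun n ↦ ?_⟩
    have hLn : f L - c n ∈ J ^ n := by
      have hxL : f (x n) - f L ∈ J ^ n := by
        rw [← map_sub, map_mem_iff, ← SModEq.sub_mem]
        exact hL n
      convert sub_mem (hx n) hxL using 1
      abel
    exact (eval_eq L n).trans <| (Ideal.Quotient.eq.mpr hLn).trans (AdicCompletion.evalₐ_mk ..).symm

end CompletionComparison

section FiniteProjectiveAlgebraLift

universe u

variable {R : Type u} [CommRing R] (I : Ideal R)

theorem toAdicCompletion_comp_bijective_of_baseChange_bijective [IsAdicComplete I R]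
    {P S : Type*} [AddCommGroup P] [Module R P] [Module.Finite R P] [Module.Projective R P]
    [CommRing S] [Algebra R S] [Module.Flat R S] {f : P →ₗ[R] S}
    (hf : Function.Bijective (f.baseChange (R ⧸ I))) :
    Function.Bijective ((IsScalarTower.toAlgHom R S
      (AdicCompletion (I.map (algebraMap R S)) S)).toLinearMap ∘ₗ f) := by
  have : IsAdicComplete I P := isAdicComplete_of_finite_projective I P
  exact toAdicCompletion_comp_bijective_of_lTensor_bijective I fun n ↦
    lTensor_bijective_of_pow_le_annihilator I hf n (R ⧸ I ^ n) Ideal.annihilator_quotient.ge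

theorem exists_finite_projective_tensorProduct_algEquiv [IsAdicComplete I R] (B₀ : Type*)
    [CommRing B₀] [Algebra (R ⧸ I) B₀] [Module.Finite (R ⧸ I) B₀] [Module.Projective (R ⧸ I) B₀]
    [Algebra.IsStandardSmooth (R ⧸ I) B₀] :
    ∃ (B : Type u) (_ : CommRing B) (_ : Algebra R B), Module.Finite R B ∧
      Module.Projective R B ∧ Nonempty ((R ⧸ I) ⊗[R] B ≃ₐ[R ⧸ I] B₀) := by
  obtain ⟨S, _, _, _, ⟨eS⟩⟩ := exists_isStandardSmooth_tensorProduct_algEquiv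
    (R := R) (B₀ := B₀) (Ideal.Quotient.mk_surjective (I := I))
  obtain ⟨P, _, _, _, _, ⟨eP⟩⟩ := exists_finite_projective_baseChange_equiv I B₀
  obtain ⟨f, hf⟩ := exists_baseChange_eq Ideal.Quotient.mk_surjective
    (eP.trans eS.symm.toLinearEquiv).toLinearMap
  have hf_bij : Function.Bijective (f.baseChange (R ⧸ I)) := hf ▸ LinearEquiv.bijective _
  let B := AdicCompletion (I.map (algebraMap R S)) S
  let g : S →ₐ[R] B := IsScalarTower.toAlgHom R S B
  let eB : P ≃ₗ[R] B := .ofBijective (g.toLinearMap ∘ₗ f)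
    (toAdicCompletion_comp_bijective_of_baseChange_bijective I hf_bij)
  have hg : Function.Bijective (Algebra.TensorProduct.map (AlgHom.id (R ⧸ I) (R ⧸ I)) g) := by
    have h_comp : Function.Bijective (g.toLinearMap.baseChange (R ⧸ I) ∘ f.baseChange (R ⧸ I)) := by
      rw [← LinearMap.coe_comp, ← LinearMap.baseChange_comp]
      exact (eB.baseChange R (R ⧸ I)).bijective
    exact (Function.Bijective.of_comp_iff _ hf_bij).mp h_comp
  exact ⟨B, inferInstance, inferInstance, .equiv eB, .of_equiv eB,
    ⟨(AlgEquiv.ofBijective _ hg).symm.trans eS⟩⟩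

end FiniteProjectiveAlgebraLift

section EtaleAlgebras

variable {R : Type*} [CommRing R]

theorem projective_of_finite_of_etale (B : Type*) [CommRing B] [Algebra R B] [Module.Finite R B]
    [Algebra.Etale R B] : Module.Projective R B := by
  have : Module.FinitePresentation R B :=
    (Module.FinitePresentation.iff_finitePresentation_of_finite _ _).mpr inferInstance
  have : Module.Flat R B := Algebra.Smooth.flat R B
  exact Module.Flat.projective_of_finitePresentation

variable (I : Ideal R)

theorem subsingleton_of_subsingleton_quotient_tensorProduct (hI : I ≤ Ideal.jacobson ⊥)
    {M : Type*} [AddCommGroup M] [Module R M] [Module.Finite R M]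
    [Subsingleton ((R ⧸ I) ⊗[R] M)] : Subsingleton M := by
  have h_le : (⊤ : Submodule R M) ≤ I • ⊤ := fun x _ ↦
    (mem_smul_top_iff_one_tmul_eq_zero I).mpr (Subsingleton.elim _ _)
  rw [← Submodule.subsingleton_iff R]
  exact subsingleton_of_bot_eq_top
    (Submodule.eq_bot_of_le_smul_of_le_jacobson_bot I ⊤ Module.Finite.fg_top h_le hI).symm

theorem etale_of_etale_quotient_tensorProduct (hI : I ≤ Ideal.jacobson ⊥) (B : Type*) [CommRing B]
    [Algebra R B] [Module.Finite R B] [Module.Projective R B]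
    [Algebra.Etale (R ⧸ I) ((R ⧸ I) ⊗[R] B)] : Algebra.Etale R B := by
  have : Algebra.FinitePresentation R B :=
    have := Module.finitePresentation_of_projective R B
    inferInstance
  have : Module.Finite R Ω[B⁄R] := Module.Finite.trans B _
  let : Algebra B ((R ⧸ I) ⊗[R] B) := Algebra.TensorProduct.rightAlgebra
  have : Subsingleton ((R ⧸ I) ⊗[R] Ω[B⁄R]) :=
    (KaehlerDifferential.tensorKaehlerEquivBase R (R ⧸ I) B ((R ⧸ I) ⊗[R] B)).toEquiv.subsingleton
  have : Algebra.FormallyUnramified R B :=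
    ⟨subsingleton_of_subsingleton_quotient_tensorProduct I hI⟩
  exact Algebra.Etale.of_formallyUnramified_of_flat

variable (B C : Type*) [CommRing B] [CommRing C] [Algebra R B] [Algebra R C]

theorem quotient_tensorProduct_map_injective [Algebra.FormallyUnramified R B] [IsHausdorff I C] :
    Function.Injective fun f : B →ₐ[R] C ↦
      Algebra.TensorProduct.map (AlgHom.id (R ⧸ I) (R ⧸ I)) f := by
  have : IsHausdorff (I.map (algebraMap R C)) C := IsHausdorff.map_algebraMap_iff.mpr inferInstance
  intro f g hfg
  refine Algebra.FormallyUnramified.ext_of_iInf (I.map (algebraMap R C)) ?_ fun x ↦ ?_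
  · simpa using IsHausdorff.iInf_pow_smul (inferInstance : IsHausdorff (I.map (algebraMap R C)) C)
  · apply (Algebra.TensorProduct.quotIdealMapEquivQuotTensor C I).injective
    simpa using AlgHom.congr_fun hfg (1 ⊗ₜ x)

theorem quotient_tensorProduct_map_surjective [Algebra.FormallySmooth R B] [IsAdicComplete I C] :
    Function.Surjective fun f : B →ₐ[R] C ↦
      Algebra.TensorProduct.map (AlgHom.id (R ⧸ I) (R ⧸ I)) f := by
  have : IsAdicComplete (I.map (algebraMap R C)) C :=
    (IsAdicComplete.map_algebraMap_iff _ _).mpr inferInstance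
  intro φ
  let e := Algebra.TensorProduct.quotIdealMapEquivQuotTensor C I
  obtain ⟨f, hf⟩ := Algebra.FormallySmooth.exists_mkₐ_comp_eq_of_isAdicComplete
    (((e.symm.toAlgHom.comp φ).restrictScalars R).comp Algebra.TensorProduct.includeRight)
  refine ⟨f, Algebra.TensorProduct.ext (by ext) (AlgHom.ext fun b ↦ ?_)⟩
  have hf_b := congr(e $(AlgHom.congr_fun hf b))
  simpa [e] using hf_b

end EtaleAlgebras

section Equivalence

universe u

theorem finite_etale_equiv_of_adicComplete_general (R : Type u) [CommRing R] (I : Ideal R)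
    [IsAdicComplete I R] :
    (∀ (B C : Type*) [CommRing B] [CommRing C] [Algebra R B] [Algebra R C]
      [Algebra.FormallyEtale R B] [Module.Finite R C] [Module.Projective R C],
      Function.Bijective fun f : B →ₐ[R] C ↦
        Algebra.TensorProduct.map (AlgHom.id (R ⧸ I) (R ⧸ I)) f) ∧
    (∀ (B₀ : Type*) [CommRing B₀] [Algebra (R ⧸ I) B₀] [Module.Finite (R ⧸ I) B₀]
      [Algebra.Etale (R ⧸ I) B₀],
      ∃ (B : Type u) (_ : CommRing B) (_ : Algebra R B), Module.Finite R B ∧ Algebra.Etale R B ∧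
        Nonempty ((R ⧸ I) ⊗[R] B ≃ₐ[R ⧸ I] B₀)) := by
  refine ⟨fun B C _ _ _ _ _ _ _ ↦ ?_, fun B₀ _ _ _ _ ↦ ?_⟩
  · have : IsAdicComplete I C := isAdicComplete_of_finite_projective I C
    exact ⟨quotient_tensorProduct_map_injective I B C, quotient_tensorProduct_map_surjective I B C⟩
  · have : Module.Projective (R ⧸ I) B₀ := projective_of_finite_of_etale B₀
    have : Algebra.IsStandardSmooth (R ⧸ I) B₀ :=
      (Algebra.Etale.iff_isStandardSmoothOfRelativeDimension_zero.mp ‹_›).isStandardSmooth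
    obtain ⟨B, _, _, _, _, ⟨e⟩⟩ := exists_finite_projective_tensorProduct_algEquiv I B₀
    have : Algebra.Etale (R ⧸ I) ((R ⧸ I) ⊗[R] B) := .of_equiv e.symm
    exact ⟨B, inferInstance, inferInstance, inferInstance,
      etale_of_etale_quotient_tensorProduct I (IsAdicComplete.le_jacobson_bot I) B, ⟨e⟩⟩

end Equivalence

/-- **Proposition 2.5(2).** Let `R` be a commutative ring with a non-zero-divisor `π` such
that `R` is `π`-adically complete and separated, and write `R₀ = R/πR`.  Then base change
along `R → R₀` induces an equivalence from finite étale `R`-algebras to finite étale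
`R₀`-algebras: (i) for finite étale `R`-algebras `B`, `C`, reduction is a bijection from
`R`-algebra homomorphisms `B → C` to `R₀`-algebra homomorphisms `B ⊗ R₀ → C ⊗ R₀`;
(ii) every finite étale `R₀`-algebra arises as the reduction of a finite étale `R`-algebra. -/
theorem finite_etale_equiv_of_adicComplete
    (R : Type u) [CommRing R] (π : R) (hπ : π ∈ nonZeroDivisors R)
    (hR : IsAdicComplete (Ideal.span {π}) R) :
    (∀ (B C : Type u) [CommRing B] [CommRing C] [Algebra R B] [Algebra R C],
      Module.Finite R B → Algebra.Etale R B → Module.Finite R C → Algebra.Etale R C →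
      Function.Bijective
        (fun f : B →ₐ[R] C =>
          (Algebra.TensorProduct.map
            (AlgHom.id (R ⧸ Ideal.span {π}) (R ⧸ Ideal.span {π})) f :
            ((R ⧸ Ideal.span {π}) ⊗[R] B) →ₐ[R ⧸ Ideal.span {π}]
              ((R ⧸ Ideal.span {π}) ⊗[R] C)))) ∧
    (∀ (B₀ : Type u) [CommRing B₀] [Algebra (R ⧸ Ideal.span {π}) B₀],
      Module.Finite (R ⧸ Ideal.span {π}) B₀ → Algebra.Etale (R ⧸ Ideal.span {π}) B₀ →
      ∃ (B : Type u) (_ : CommRing B) (_ : Algebra R B),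
        Module.Finite R B ∧ Algebra.Etale R B ∧
          Nonempty
            (((R ⧸ Ideal.span {π}) ⊗[R] B) ≃ₐ[R ⧸ Ideal.span {π}] B₀)) := by
  obtain ⟨h_hom, h_lift⟩ := finite_etale_equiv_of_adicComplete_general R (Ideal.span {π})
  refine ⟨fun B C _ _ _ _ _ _ _ _ ↦ ?_, fun B₀ _ _ _ _ ↦ h_lift B₀⟩
  have : Module.Projective R C := projective_of_finite_of_etale C
  exact h_hom B C
end

section
/- Let p be a prime, A a perfect commutative ring of characteristic p, and R' a finite étale W(A)-algebra. Then the (injective) image of R' in R'[1/p] is the integral closure of W(A) in R'[1/p]: an element x ∈ R'[1/p] is integral over W(A) if and only if x lies in the image of R'. (Lemma 2.7.) -/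
/-!
Write `W = W(A)`. Since `A` is perfect, `p` is a nonzerodivisor in `W` and `W/p = A` is reduced;
these are the only properties of `W` and `p` that matter. By flatness `p` is a nonzerodivisor in
`R'`. Moreover `R'/p` is finite étale over the reduced ring `A`, hence reduced: its fibres over
residue fields of `A` are reduced, and an element of a projective `A`-module that vanishes in all
fibres is zero. If `x ∈ R'[1/p]` is integral over `R'` and `p x = y` lies in `R'`, clearing
denominators in a monic equation for `x` shows `p ∣ y ^ d` for some `d`, hence `p ∣ y` and
`x ∈ R'`. Applying this repeatedly strips all powers of `p` from the denominator.
-/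

section Reducedness

open TensorProduct

theorem eq_zero_of_forall_residueField_tmul_eq_zero {R M : Type*} [CommRing R] [IsReduced R]
    [AddCommGroup M] [Module R M] [Module.Projective R M] {m : M}
    (hm : ∀ (q : Ideal R) [q.IsPrime], (1 : q.ResidueField) ⊗ₜ[R] m = 0) : m = 0 := by
  refine (Module.forall_dual_apply_eq_zero_iff R m).mp fun f ↦ ?_
  have hf : f m ∈ nilradical R := by
    rw [nilradical_eq_sInf, Ideal.mem_sInf]
    intro q (hq : q.IsPrime)
    have h : f.baseChange q.ResidueField (1 ⊗ₜ m) = 0 := by rw [hm q, map_zero]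
    rwa [Module.Dual.baseChange_apply_tmul, ← Algebra.algebraMap_eq_smul_one,
      Ideal.algebraMap_residueField_eq_zero] at h
  exact (mem_nilradical.mp hf).eq_zero

variable (R S : Type*) [CommRing R] [CommRing S] [Algebra R S]

theorem isReduced_of_forall_isReduced_fiber [IsReduced R] [Module.Projective R S]
    (h : ∀ (q : Ideal R) [q.IsPrime], IsReduced (q.Fiber S)) : IsReduced S where
  eq_zero x hx := by
    refine eq_zero_of_forall_residueField_tmul_eq_zero (R := R) fun q _ ↦ ?_
    have := h q
    exact (hx.map (Algebra.TensorProduct.includeRight : S →ₐ[R] q.Fiber S)).eq_zero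

variable [Algebra.FormallyUnramified R S] [Algebra.EssFiniteType R S] [Module.Projective R S]

theorem isReduced_of_formallyUnramified_of_projective [IsReduced R] : IsReduced S :=
  isReduced_of_forall_isReduced_fiber R S fun q _ ↦
    Algebra.FormallyUnramified.isReduced_of_field q.ResidueField _

variable {R}

theorem isRadical_map_of_formallyUnramified_of_projective {I : Ideal R} (hI : I.IsRadical) :
    (I.map (algebraMap R S)).IsRadical := by
  have := I.isRadical_iff_quotient_reduced.mp hI
  have := isReduced_of_formallyUnramified_of_projective (R ⧸ I) ((R ⧸ I) ⊗[R] S)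
  rw [Ideal.isRadical_iff_quotient_reduced]
  exact isReduced_of_injective _ (Algebra.TensorProduct.quotIdealMapEquivQuotTensor S I).injective

theorem isRadical_algebraMap_of_formallyUnramified_of_projective {ϖ : R} (hϖ : IsRadical ϖ) :
    IsRadical (algebraMap R S ϖ) := by
  rw [isRadical_iff_span_singleton] at hϖ ⊢
  simpa only [Ideal.map_span, Set.image_singleton] using
    isRadical_map_of_formallyUnramified_of_projective S hϖ

end Reducedness

theorem algebraMap_mem_nonZeroDivisors_of_flat {R : Type*} (S : Type*) [CommRing R] [CommRing S]
    [Algebra R S] [Module.Flat R S] {ϖ : R} (hϖ : ϖ ∈ nonZeroDivisors R) :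
    algebraMap R S ϖ ∈ nonZeroDivisors S := by
  refine mem_nonZeroDivisors_iff_left.mpr fun s hs ↦ ?_
  exact (Module.Flat.isSMulRegular_of_nonZeroDivisors hϖ).right_eq_zero_of_smul
    (by rwa [Algebra.smul_def])

section IntegralClosure

theorem mem_range_of_isIntegral_of_mul_mem_range {S K : Type*} [CommRing S] [CommRing K]
    [Algebra S K] (hinj : Function.Injective (algebraMap S K)) {ϖ : S} (hrad : IsRadical ϖ)
    (hreg : IsRegular (algebraMap S K ϖ)) {x : K} (hx : IsIntegral S x)
    (hxϖ : x * algebraMap S K ϖ ∈ (algebraMap S K).range) :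
    x ∈ (algebraMap S K).range := by
  obtain ⟨P, hP, hPx⟩ := hx
  obtain ⟨y, hy⟩ := hxϖ
  have hdvd : ϖ ∣ y ^ P.natDegree :=
    Polynomial.dvd_pow_natDegree_of_eval₂_eq_zero hinj hP ϖ y x hPx (by rw [hy, mul_comm])
  obtain ⟨z, rfl⟩ := hrad _ _ hdvd
  rw [map_mul, mul_comm] at hy
  exact ⟨z, hreg.right hy⟩

theorem isIntegrallyClosedIn_away_of_isRadical {S : Type*} (K : Type*) [CommRing S] [CommRing K]
    [Algebra S K] {ϖ : S} [IsLocalization.Away ϖ K] (hrad : IsRadical ϖ)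
    (hreg : ϖ ∈ nonZeroDivisors S) : IsIntegrallyClosedIn S K := by
  have hinj : Function.Injective (algebraMap S K) :=
    IsLocalization.injective K (Submonoid.powers_le.mpr hreg)
  have hunit : IsUnit (algebraMap S K ϖ) := IsLocalization.Away.algebraMap_isUnit ϖ
  refine isIntegrallyClosedIn_iff.mpr ⟨hinj, fun {x} hx ↦ ?_⟩
  obtain ⟨n, y, hy⟩ := IsLocalization.Away.surj ϖ x
  induction n generalizing x y with
  | zero => exact ⟨y, by rw [← hy, pow_zero, mul_one]⟩
  | succ n ih =>
    refine mem_range_of_isIntegral_of_mul_mem_range hinj hrad hunit.isRegular hx ?_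
    exact ih (hx.mul isIntegral_algebraMap) y (by rw [← hy, pow_succ', mul_assoc])

end IntegralClosure

theorem isReduced_of_perfectRing (p : ℕ) [Fact p.Prime] (A : Type*) [CommRing A] [CharP A p]
    [PerfectRing A p] : IsReduced A := by
  rw [← nilradical_eq_bot_iff, ← pNilradical_eq_nilradical (Fact.out : p.Prime).one_lt,
    PerfectRing.pNilradical_eq_bot]

section WittVector

variable (p : ℕ) [Fact p.Prime] (A : Type*) [CommRing A] [CharP A p] [PerfectRing A p]

theorem isRadical_natCast_wittVector : IsRadical (p : WittVector p A) := by
  have := isReduced_of_perfectRing p A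
  rw [isRadical_iff_span_singleton, ← WittVector.ker_constantCoeff]
  exact Ideal.isRadical_bot.comap _

theorem natCast_mem_nonZeroDivisors_wittVector :
    (p : WittVector p A) ∈ nonZeroDivisors (WittVector p A) :=
  mem_nonZeroDivisors_iff_right.mpr WittVector.eq_zero_of_p_mul_eq_zero

end WittVector

theorem finite_etale_wittVector_integrally_closed_general {R : Type*} (S K : Type*) [CommRing R]
    [CommRing S] [CommRing K] [Algebra R S] [Module.Finite R S] [Algebra.Etale R S] {ϖ : R}
    (hrad : IsRadical ϖ) (hreg : ϖ ∈ nonZeroDivisors R) [Algebra S K]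
    [IsLocalization.Away (algebraMap R S ϖ) K] [Algebra R K] [IsScalarTower R S K] :
    IsIntegralClosure S R K := by
  have : Module.FinitePresentation R S := .of_finite_of_finitePresentation R S
  have : Module.Projective R S := Module.Flat.projective_of_finitePresentation
  have : IsIntegrallyClosedIn S K := isIntegrallyClosedIn_away_of_isRadical K
    (isRadical_algebraMap_of_formallyUnramified_of_projective S hrad)
    (algebraMap_mem_nonZeroDivisors_of_flat S hreg)
  exact .of_isIntegrallyClosedIn

/-- **Lemma 2.7.** Let `p` be a prime, `A` a perfect commutative ring of characteristic `p`,
and `R'` a finite étale `W(A)`-algebra.  Then `R'` is the integral closure of `W(A)` in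
`R'[1/p]`: an element `x` of `R'[1/p]` is integral over `W(A)` if and only if it lies in the
image of `R'`. -/
theorem finite_etale_wittVector_integrally_closed
    (p : ℕ) [Fact p.Prime]
    (A : Type u) [CommRing A] [CharP A p] [PerfectRing A p]
    (R' : Type u) [CommRing R'] [Algebra (WittVector p A) R']
    [Module.Finite (WittVector p A) R'] [Algebra.Etale (WittVector p A) R']
    -- `K` is the localization `R'[1/p]`:
    (K : Type u) [CommRing K] [Algebra R' K] [IsLocalization.Away (p : R') K]
    [Algebra (WittVector p A) K] [IsScalarTower (WittVector p A) R' K] :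
    ∀ x : K, IsIntegral (WittVector p A) x ↔ x ∈ (algebraMap R' K).range := by
  have : IsLocalization.Away (algebraMap (WittVector p A) R' p) K := by rwa [map_natCast]
  have := finite_etale_wittVector_integrally_closed_general R' K
    (isRadical_natCast_wittVector p A) (natCast_mem_nonZeroDivisors_wittVector p A)
  exact fun _ ↦ IsIntegralClosure.isIntegral_iff (A := R')
end

section
/- Let k be a perfect field of characteristic 2 and let n be an odd positive integer. Let f ∈ k[X_1,…,X_n] be a polynomial, let J(f) be the ideal generated by the partial derivatives ∂f/∂X_1, …, ∂f/∂X_n, and let m be a maximal ideal of k[X_1,…,X_n] containing J(f) such that the localization of k[X_1,…,X_n]/J(f) at m is a nonzero finite-dimensional k-vector space (so that the corresponding closed point is an isolated singular point of f : 𝔸ⁿ_k → 𝔸¹_k). Then the k-dimension of this localization — the Milnor number μ(f, x) — is even. (Proposition 3.21: in characteristic 2, the Milnor number of an isolated singular point of a function on a smooth variety of odd dimension is even.) -/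
open RingTheory.Sequence IsLocalRing CategoryTheory Abelian Pointwise

/-!
Let `A` be the localization of `k[X₁, …, Xₙ]` at `m`, let `y₁, …, yₙ ∈ A` be the partial
derivatives of `f`, and let `ν` be the dimension of `A / (y)` over `k`. Since `A` has depth `n`,
the `yᵢ` form a regular sequence in any order, so `A / (yᵢ ^ N)ᵢ` has dimension `N ^ n * ν`; by
Nakayama it is then free of rank `ν` over `k[Y] / (Yᵢ ^ N)ᵢ`, where `Yᵢ` acts as `yᵢ`.

Let `D` be a `k`-derivation of `A` killing every `yᵢ`, and suppose `c * D a = h(y)` for some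
`h ∈ k[Y]`. The commutator of the `k[Y]`-linear maps `c • D` and multiplication by `a` is
multiplication by `h`. Its trace on `A / (yᵢ ^ N)ᵢ` vanishes, so `ν h ∈ (Yᵢ ^ N)ᵢ` for all `N`, and
`h = 0` as soon as `ν ≠ 0` in `k`.

Suppose `ν` is odd. With `D = 0` this says that the `yᵢ` are algebraically independent, so
`k[X]` is algebraic over `k[y]`. In characteristic `2` the Hessian of `f` is alternating; having odd
size, it kills some vector `v ≠ 0`, so that `D = ∑ vₗ ∂ₗ` kills every `yᵢ`. If `vⱼ ≠ 0`, then
`D Xⱼ = vⱼ` divides some nonzero `h(y)`, a contradiction.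
-/

universe u v

section Depth

variable {R : Type u} [CommRing R] [IsLocalRing R]

/-- The module `M` over the local ring `R` has depth at least `d`. Mathlib has no `depth`; this is
its standard characterization by an `M`-regular sequence of length `d` in the maximal ideal. -/
def HasDepthAtLeast (R : Type u) [CommRing R] [IsLocalRing R] (M : Type v) [AddCommGroup M]
    [Module R M] (d : ℕ) : Prop :=
  ∃ rs : List R, rs.length = d ∧ (∀ r ∈ rs, r ∈ maximalIdeal R) ∧ IsRegular M rs

variable [IsNoetherianRing R] {M : Type v} [AddCommGroup M] [Module R M] [Module.Finite R M]

-- Rees: depth at least `d` is the vanishing of `Ext i (R ⧸ m) M` for `i < d`, so the long exact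
-- sequence of multiplication by `z` gives the claim.
lemma HasDepthAtLeast.quotSMulTop [Small.{v} R] {d : ℕ} (h : HasDepthAtLeast R M (d + 1)) {z : R}
    (hzm : z ∈ maximalIdeal R) (hz : IsSMulRegular M z) :
    HasDepthAtLeast R (QuotSMulTop z M) d := by
  have hlt (L : Type v) [AddCommGroup L] [Module R L] [Module.Finite R L] [Nontrivial L] :
      maximalIdeal R • (⊤ : Submodule R L) < ⊤ :=
    lt_top_iff_ne_top.2 (Submodule.top_ne_ideal_smul_of_le_jacobson_annihilator
      (maximalIdeal_le_jacobson _)).symm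
  have : Nontrivial M := let ⟨_, _, _, hreg⟩ := h; hreg.nontrivial
  have : Nontrivial (QuotSMulTop z M) := nontrivial_quotSMulTop_of_mem_maximalIdeal M hzm
  have hext := ((ModuleCat.exists_isRegular_tfae (maximalIdeal R) (d + 1) (ModuleCat.of R M)
    (hlt M)).out 3 1).1 h
  refine ((ModuleCat.exists_isRegular_tfae (maximalIdeal R) d (ModuleCat.of R (QuotSMulTop z M))
    (hlt _)).out 1 3).1 fun i hi ↦ ?_
  have hz' : IsSMulRegular (ModuleCat.of R M) z := hz
  have hext_i := AddCommGrpCat.isZero_of_iff_subsingleton.2 (hext i (by lia))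
  have hext_succ := AddCommGrpCat.isZero_of_iff_subsingleton.2 (hext (i + 1) (by lia))
  exact AddCommGrpCat.subsingleton_of_isZero <| ShortComplex.Exact.isZero_of_both_zeros
    (Ext.covariant_sequence_exact₃' _ hz'.smulShortComplex_shortExact i (i + 1) rfl)
    (hext_i.eq_zero_of_src _) (hext_succ.eq_zero_of_tgt _)

-- Nakayama: the `p`-torsion `N` of `M` satisfies `N ∩ x M = x N`, so it survives in `M / x M`.
lemma exists_mem_associatedPrimes_quotSMulTop {x : R} (hxm : x ∈ maximalIdeal R)
    (hx : IsSMulRegular M x) {p : Ideal R} (hp : p ∈ associatedPrimes R M) :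
    ∃ q ∈ associatedPrimes R (QuotSMulTop x M), p ≤ q ∧ x ∈ q := by
  let N : Submodule R M := Submodule.torsionBySet R M p
  have hN : N ≠ ⊥ := by
    obtain ⟨hpp, a, rfl⟩ := isAssociatedPrime_iff.1 hp
    refine (Submodule.ne_bot_iff _).2 ⟨a, ?_, ?_⟩
    · exact (Submodule.mem_torsionBySet_iff _ _).2 fun r ↦ Submodule.mem_colon_singleton.1 r.2
    · rintro rfl
      exact hpp.ne_top ((Ideal.eq_top_iff_one _).2 (by simp [Submodule.mem_colon_singleton]))
  have hNx : ¬ N ≤ x • ⊤ := by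
    refine fun hle ↦ hN (Submodule.eq_bot_of_le_smul_of_le_jacobson_bot (maximalIdeal R) N
      (IsNoetherian.noetherian N) (fun y hy ↦ ?_) (maximalIdeal_le_jacobson _))
    obtain ⟨w, -, rfl⟩ := hle hy
    refine Submodule.smul_mem_smul hxm ((Submodule.mem_torsionBySet_iff _ _).2 fun r ↦ hx ?_)
    have hr : (r : R) • x • w = 0 := (Submodule.mem_torsionBySet_iff _ _).1 hy r
    simpa only [smul_zero, smul_comm x] using hr
  obtain ⟨w, hw, hwx⟩ := SetLike.not_le_iff_exists.1 hNx
  obtain ⟨q, hq, hann⟩ := exists_le_isAssociatedPrime_of_isNoetherianRing R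
    (Submodule.Quotient.mk w : QuotSMulTop x M) (mt (Submodule.Quotient.mk_eq_zero _).1 hwx)
  refine ⟨q, hq, fun a ha ↦ hann ?_, hann ?_⟩ <;> rw [Submodule.mem_colon_singleton]
  · rw [← Submodule.Quotient.mk_smul, (Submodule.mem_torsionBySet_iff _ _).1 hw ⟨a, ha⟩]
    exact zero_mem _
  · exact Module.mem_annihilator.1 (QuotSMulTop.mem_annihilator M x) _

omit [IsLocalRing R] [IsNoetherianRing R] in
lemma ringKrullDim_quotient_succ_le_of_lt {p q : Ideal R} [p.IsPrime] (hpq : p < q) :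
    ringKrullDim (R ⧸ q) + 1 ≤ ringKrullDim (R ⧸ p) := by
  obtain ⟨x, hxq, hxp⟩ := SetLike.exists_of_lt hpq
  have hx : Ideal.Quotient.mk p x ∈ nonZeroDivisors (R ⧸ p) :=
    mem_nonZeroDivisors_of_ne_zero (mt Ideal.Quotient.eq_zero_iff_mem.1 hxp)
  have hspan :
      Ideal.span {Ideal.Quotient.mk p x} ≤ RingHom.ker (Ideal.Quotient.factor hpq.le) := by
    rw [Ideal.span_singleton_le_iff_mem, RingHom.mem_ker, Ideal.Quotient.factor_mk,
      Ideal.Quotient.eq_zero_iff_mem]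
    exact hxq
  have hsurj := ringKrullDim_le_of_surjective (Ideal.Quotient.lift _ _ fun a ha ↦ hspan ha)
    (Ideal.Quotient.lift_surjective_of_surjective _ _ (Ideal.Quotient.factor_surjective hpq.le))
  exact (add_le_add_left hsurj 1).trans (ringKrullDim_quotient_succ_le_of_nonZeroDivisor hx)

lemma HasDepthAtLeast.le_ringKrullDim_quotient {d : ℕ} (h : HasDepthAtLeast R M d) {p : Ideal R}
    (hp : p ∈ associatedPrimes R M) : d ≤ ringKrullDim (R ⧸ p) := by
  obtain ⟨rs, rfl, hm, hreg⟩ := h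
  induction rs generalizing M p with
  | nil =>
    have := hp.isPrime
    simpa using ringKrullDim_nonneg_of_nontrivial
  | cons x rs ih =>
    rw [isRegular_cons_iff] at hreg
    rw [List.forall_mem_cons] at hm
    have := hp.isPrime
    obtain ⟨q, hq, hpq, hxq⟩ := exists_mem_associatedPrimes_quotSMulTop hm.1 hreg.1 hp
    have hxp : x ∉ p := fun hxp ↦ by
      have hmem : x ∈ ⋃ p ∈ associatedPrimes R M, (p : Set R) := Set.mem_biUnion hp hxp
      rw [biUnion_associatedPrimes_eq_compl_regular] at hmem
      exact hmem hreg.1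
    have hlt : p < q := SetLike.lt_iff_le_and_exists.2 ⟨hpq, x, hxq, hxp⟩
    calc (((x :: rs).length : ℕ) : WithBot ℕ∞) = rs.length + 1 := by simp
      _ ≤ ringKrullDim (R ⧸ q) + 1 := add_le_add_left (ih hq hm.2 hreg.2) 1
      _ ≤ ringKrullDim (R ⧸ p) := ringKrullDim_quotient_succ_le_of_lt hlt

omit [IsLocalRing R] [IsNoetherianRing R] [Module.Finite R M] in
lemma ringKrullDim_quotient_le_supportDim {p : PrimeSpectrum R} (hp : p ∈ Module.support R M) :
    ringKrullDim (R ⧸ p.asIdeal) ≤ Module.supportDim R M := by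
  rw [ringKrullDim_quotient]
  exact Order.krullDim_le_of_strictMono (fun q ↦ ⟨q.1, Module.mem_support_mono q.2 hp⟩)
    fun _ _ hlt ↦ hlt

lemma HasDepthAtLeast.isSMulRegular {d : ℕ} (h : HasDepthAtLeast R M (d + 1)) {z : R}
    (hdim : Module.supportDim R (QuotSMulTop z M) ≤ d) :
    IsSMulRegular M z := by
  by_contra hzreg
  have hz' : z ∈ ⋃ p ∈ associatedPrimes R M, (p : Set R) := by
    rwa [biUnion_associatedPrimes_eq_compl_regular]
  simp only [Set.mem_iUnion] at hz'
  obtain ⟨p, hp, hzp⟩ := hz'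
  have := hp.isPrime
  have hsupp : (⟨p, hp.isPrime⟩ : PrimeSpectrum R) ∈ Module.support R (QuotSMulTop z M) := by
    rw [Module.support_quotSMulTop, Module.support_eq_zeroLocus]
    exact ⟨Submodule.annihilator_top (R := R) (M := M) ▸ hp.annihilator_le,
      Set.singleton_subset_iff.2 hzp⟩
  have hdim_p := (ringKrullDim_quotient_le_supportDim hsupp).trans hdim
  exact Nat.not_succ_le_self d (by exact_mod_cast (h.le_ringKrullDim_quotient hp).trans hdim_p)

lemma supportDim_le_supportDim_quotient_add_length {zs : List R}
    (hm : ∀ z ∈ zs, z ∈ maximalIdeal R) :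
    Module.supportDim R M ≤
      Module.supportDim R (M ⧸ Ideal.ofList zs • (⊤ : Submodule R M)) + zs.length := by
  induction zs generalizing M with
  | nil =>
    rw [Ideal.ofList_nil, Submodule.bot_smul]
    simp [Module.supportDim_eq_of_equiv (Submodule.quotEquivOfEqBot (⊥ : Submodule R M) rfl)]
  | cons z zs ih =>
    rw [List.forall_mem_cons] at hm
    have e := Submodule.quotOfListConsSMulTopEquivQuotSMulTopInner M z zs
    rw [Module.supportDim_eq_of_equiv e]
    refine (Module.supportDim_le_supportDim_quotSMulTop_succ hm.1).trans ?_
    simpa [add_assoc] using add_le_add_left (ih (M := QuotSMulTop z M) hm.2) 1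

lemma HasDepthAtLeast.isWeaklyRegular [Small.{v} R] {zs : List R}
    (h : HasDepthAtLeast R M zs.length)
    (hm : ∀ z ∈ zs, z ∈ maximalIdeal R)
    (hdim : Module.supportDim R (M ⧸ Ideal.ofList zs • (⊤ : Submodule R M)) ≤ 0) :
    IsWeaklyRegular M zs := by
  induction zs generalizing M with
  | nil => exact .nil R M
  | cons z zs ih =>
    rw [List.forall_mem_cons] at hm
    have e := Submodule.quotOfListConsSMulTopEquivQuotSMulTopInner M z zs
    rw [Module.supportDim_eq_of_equiv e] at hdim
    have hdim_z := (supportDim_le_supportDim_quotient_add_length (M := QuotSMulTop z M) hm.2).trans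
      (add_le_add_left hdim _)
    have hz : IsSMulRegular M z := h.isSMulRegular (by simpa using hdim_z)
    exact (isWeaklyRegular_cons_iff M z zs).2 ⟨hz, ih (h.quotSMulTop hm.1 hz) hm.2 hdim⟩

end Depth

section Length

lemma length_quotient_span_mul (k : Type*) {B : Type*} [CommRing k] [CommRing B] [Algebra k B]
    (a : B) {b : B} (hb : b ∈ nonZeroDivisors B) :
    Module.length k (B ⧸ Ideal.span {a * b}) =
      Module.length k (B ⧸ Ideal.span {a}) + Module.length k (B ⧸ Ideal.span {b}) := by
  have hsmul : Ideal.span {a * b} = b • Ideal.span {a} := by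
    rw [mul_comm, Ideal.span, Ideal.span, Submodule.smul_span, Set.smul_set_singleton, smul_eq_mul]
  rw [hsmul]
  exact Module.length_eq_add_of_exact ((Ideal.mulQuot b (Ideal.span {a})).restrictScalars k)
    ((Ideal.quotOfMul b (Ideal.span {a})).restrictScalars k)
    (Ideal.mulQuot_injective _ hb) (Ideal.quotOfMul_surjective _)
    (Ideal.exact_mulQuot_quotOfMul _)

lemma length_quotient_span_pow (k : Type*) {B : Type*} [CommRing k] [CommRing B] [Algebra k B]
    {b : B} (hb : b ∈ nonZeroDivisors B) (N : ℕ) :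
    Module.length k (B ⧸ Ideal.span {b ^ N}) = N * Module.length k (B ⧸ Ideal.span {b}) := by
  induction N with
  | zero => simp
  | succ N ih => rw [pow_succ, length_quotient_span_mul k _ hb, ih]; push_cast; ring

lemma length_quotient_sup_span_pow (k : Type*) {B : Type*} [CommRing k] [CommRing B] [Algebra k B]
    {J : Ideal B} {b : B} (hb : Ideal.Quotient.mk J b ∈ nonZeroDivisors (B ⧸ J)) (N : ℕ) :
    Module.length k (B ⧸ J ⊔ Ideal.span {b ^ N}) =
      N * Module.length k (B ⧸ J ⊔ Ideal.span {b}) := by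
  have hlen (c : B) : Module.length k (B ⧸ J ⊔ Ideal.span {c}) =
      Module.length k ((B ⧸ J) ⧸ Ideal.span {Ideal.Quotient.mk J c}) := by
    rw [← Set.image_singleton, ← Ideal.map_span]
    exact (DoubleQuot.quotQuotEquivQuotSupₐ k J (Ideal.span {c})).symm.toLinearEquiv.length_eq
  rw [hlen, hlen, map_pow, length_quotient_span_pow k hb]

variable {A : Type u} [CommRing A] [IsLocalRing A] [IsNoetherianRing A] {σ : Type*} {y : σ → A}

omit [IsLocalRing A] [IsNoetherianRing A] in
lemma span_range_eq_span_image_compl_sup (y : σ → A) (i : σ) :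
    Ideal.span (Set.range y) = Ideal.span (y '' {i}ᶜ) ⊔ Ideal.span {y i} := by
  rw [← Set.image_singleton, ← Ideal.span_union, ← Set.image_union, Set.compl_union_self,
    Set.image_univ]

variable [Fintype σ]

lemma HasDepthAtLeast.mk_mem_nonZeroDivisors
    (h : HasDepthAtLeast A A (Fintype.card σ)) (hy : ∀ i, y i ∈ maximalIdeal A)
    (hdim : ringKrullDim (A ⧸ Ideal.span (Set.range y)) ≤ 0) (i : σ) :
    Ideal.Quotient.mk (Ideal.span (y '' {i}ᶜ)) (y i) ∈
      nonZeroDivisors (A ⧸ Ideal.span (y '' {i}ᶜ)) := by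
  classical
  let zs : List A := (Finset.univ.erase i).toList.map y
  have hzs : Ideal.ofList zs = Ideal.span (y '' {i}ᶜ) := by
    rw [Ideal.ofList]
    congr 1
    ext a
    simp [zs]
  have hall : Ideal.ofList (zs ++ [y i]) = Ideal.span (Set.range y) := by
    rw [Ideal.ofList_append, hzs, Ideal.ofList_singleton, span_range_eq_span_image_compl_sup y i]
  have hlen : (zs ++ [y i]).length = Fintype.card σ := by
    simpa [zs] using Nat.sub_add_cancel (Fintype.card_pos_iff.2 ⟨i⟩)
  have hreg : IsWeaklyRegular A (zs ++ [y i]) := by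
    refine HasDepthAtLeast.isWeaklyRegular (hlen ▸ h) ?_ ?_
    · simp only [zs, List.forall_mem_append, List.forall_mem_map, List.forall_mem_singleton]
      exact ⟨fun j _ ↦ hy j, hy i⟩
    · rwa [hall, smul_eq_mul, Ideal.mul_top, Module.supportDim_quotient_eq_ringKrullDim]
  have hi := ((isWeaklyRegular_append_iff _ _ _).1 hreg).2
  rw [isWeaklyRegular_singleton_iff, smul_eq_mul, Ideal.mul_top, hzs] at hi
  exact mem_nonZeroDivisors_iff_right.2 fun a ha ↦ hi.right_eq_zero_of_smul <| by
    rwa [Algebra.smul_def, mul_comm]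

omit [IsLocalRing A] [IsNoetherianRing A] [Fintype σ] in
lemma ringKrullDim_quotient_span_range_piecewise_pow [DecidableEq σ] (y : σ → A) {N : ℕ}
    (hN : N ≠ 0) (s : Finset σ) :
    ringKrullDim (A ⧸ Ideal.span (Set.range (s.piecewise (y ^ N) y))) =
      ringKrullDim (A ⧸ Ideal.span (Set.range y)) := by
  have hlocus : PrimeSpectrum.zeroLocus (Set.range (s.piecewise (y ^ N) y)) =
      PrimeSpectrum.zeroLocus (Set.range y) := by
    ext p
    simp only [PrimeSpectrum.mem_zeroLocus, Set.range_subset_iff, SetLike.mem_coe]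
    refine forall_congr' fun i ↦ ?_
    by_cases hi : i ∈ s <;> simp [hi, p.isPrime.pow_mem_iff_mem N (Nat.pos_of_ne_zero hN)]
  rw [ringKrullDim_quotient, ringKrullDim_quotient, PrimeSpectrum.zeroLocus_span,
    PrimeSpectrum.zeroLocus_span, hlocus]

lemma length_quotient_span_range_pow (k : Type*) [CommRing k] [Algebra k A]
    (h : HasDepthAtLeast A A (Fintype.card σ)) (hy : ∀ i, y i ∈ maximalIdeal A)
    (hdim : ringKrullDim (A ⧸ Ideal.span (Set.range y)) ≤ 0) {N : ℕ} (hN : N ≠ 0) :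
    Module.length k (A ⧸ Ideal.span (Set.range (y ^ N))) =
      N ^ Fintype.card σ * Module.length k (A ⧸ Ideal.span (Set.range y)) := by
  classical
  suffices hs : ∀ s : Finset σ,
      Module.length k (A ⧸ Ideal.span (Set.range (s.piecewise (y ^ N) y))) =
        N ^ s.card * Module.length k (A ⧸ Ideal.span (Set.range y)) by
    have huniv := hs Finset.univ
    rwa [Finset.piecewise_univ, Finset.card_univ] at huniv
  intro s
  induction s using Finset.induction_on with
  | empty => rw [Finset.piecewise_empty, Finset.card_empty, pow_zero, one_mul]
  | insert i s his ih =>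
    let w := s.piecewise (y ^ N) y
    have hwi : w i = y i := s.piecewise_eq_of_notMem _ _ his
    have hw (j) : w j ∈ maximalIdeal A := by
      by_cases hj : j ∈ s <;>
        simp [w, hj, hy j, Ideal.pow_mem_of_mem _ _ _ (Nat.pos_of_ne_zero hN)]
    have hreg := h.mk_mem_nonZeroDivisors hw
      ((ringKrullDim_quotient_span_range_piecewise_pow y hN s).trans_le hdim) i
    have himage : Function.update w i (y i ^ N) '' {i}ᶜ = w '' {i}ᶜ :=
      Set.image_congr fun j hj ↦ Function.update_of_ne hj _ _
    rw [Finset.piecewise_insert, Pi.pow_apply, span_range_eq_span_image_compl_sup _ i, himage,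
      Function.update_self, ← hwi, length_quotient_sup_span_pow k hreg,
      ← span_range_eq_span_image_compl_sup w i, ih, Finset.card_insert_of_notMem his, pow_succ]
    ring

end Length

section Polynomial

open Polynomial

lemma isSMulRegular_quotient_map_C_of_monic {R : Type*} [CommRing R] (I : Ideal R) {p : R[X]}
    (hp : p.Monic) : IsSMulRegular (R[X] ⧸ I.map C) p := by
  rw [isSMulRegular_quotient_iff_mem_of_smul_mem]
  intro g hg
  rw [← Ideal.mk_ker (I := I), ← Polynomial.ker_mapRingHom, RingHom.mem_ker,
    coe_mapRingHom] at hg ⊢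
  rwa [smul_eq_mul, Polynomial.map_mul, (hp.map _).mul_right_eq_zero_iff] at hg

lemma isWeaklyRegular_map_C_append_monic {R : Type*} [CommRing R] {rs : List R}
    (h : IsWeaklyRegular R rs) {p : R[X]} (hp : p.Monic) :
    IsWeaklyRegular R[X] (rs.map C ++ [p]) := by
  rw [isWeaklyRegular_append_iff, isWeaklyRegular_singleton_iff, smul_eq_mul, Ideal.mul_top,
    ← Ideal.map_ofList]
  exact ⟨h.of_flat, isSMulRegular_quotient_map_C_of_monic _ hp⟩

lemma exists_monic_mem_of_isMaximal {R : Type*} [CommRing R] [IsJacobsonRing R] (m : Ideal R[X])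
    [hm : m.IsMaximal] : ∃ p ∈ m, p.Monic := by
  have hcomap : (m.comap C).IsMaximal := isMaximal_comap_C_of_isJacobsonRing m
  have hne : m ≠ (m.comap C).map C := fun heq ↦ by
    have hfield : IsField (R[X] ⧸ (m.comap C).map C) :=
      (Ideal.Quotient.maximal_ideal_iff_isField_quotient _).1 (heq ▸ hm)
    exact Polynomial.not_isField _
      ((m.comap C).polynomialQuotientEquivQuotientPolynomial.toMulEquiv.isField hfield)
  obtain ⟨p, hp, heq⟩ := exists_monic_span_sup_map_eq R m hcomap hne
  exact ⟨p, heq ▸ Ideal.mem_sup_right (Ideal.mem_span_singleton_self p), hp⟩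

lemma exists_isWeaklyRegular_of_ringEquiv {R S : Type*} [CommRing R] [CommRing S] (e : R ≃+* S)
    {m : Ideal S} {d : ℕ}
    (h : ∃ rs : List R, rs.length = d ∧ (∀ r ∈ rs, e r ∈ m) ∧ IsWeaklyRegular R rs) :
    ∃ ss : List S, ss.length = d ∧ (∀ s ∈ ss, s ∈ m) ∧ IsWeaklyRegular S ss := by
  obtain ⟨rs, rfl, hm, hreg⟩ := h
  refine ⟨rs.map e, List.length_map _, by simpa using hm, ?_⟩
  refine (AddEquiv.isWeaklyRegular_congr (e := e.toAddEquiv) ?_).1 hreg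
  exact List.forall₂_map_right_iff.2 (List.forall₂_same.2 fun r _ x ↦ map_mul e r x)

lemma exists_isWeaklyRegular_of_isMaximal (k : Type*) [Field k] (σ : Type*) [Finite σ]
    (m : Ideal (MvPolynomial σ k)) [m.IsMaximal] :
    ∃ rs : List (MvPolynomial σ k), rs.length = Nat.card σ ∧ (∀ r ∈ rs, r ∈ m) ∧
      IsWeaklyRegular (MvPolynomial σ k) rs := by
  induction σ using Finite.induction_empty_option with
  | of_equiv e ih =>
    let e' := (MvPolynomial.renameEquiv k e).toRingEquiv
    have := Ideal.comap_isMaximal_of_equiv e' (p := m)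
    exact Nat.card_congr e ▸ exists_isWeaklyRegular_of_ringEquiv e' (ih (m.comap e'))
  | h_empty => exact ⟨[], by simp⟩
  | @h_option σ _ ih =>
    let e := (MvPolynomial.optionEquivLeft k σ).symm.toRingEquiv
    have := Ideal.comap_isMaximal_of_equiv e (p := m)
    have := isMaximal_comap_C_of_isJacobsonRing (m.comap e)
    obtain ⟨rs, hlen, hm, hreg⟩ := ih ((m.comap e).comap C)
    obtain ⟨p, hpm, hp⟩ := exists_monic_mem_of_isMaximal (m.comap e)
    refine exists_isWeaklyRegular_of_ringEquiv e
      ⟨rs.map C ++ [p], ?_, ?_, isWeaklyRegular_map_C_append_monic hreg hp⟩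
    · simp [hlen]
    · simpa [or_imp, forall_and] using ⟨hm, hpm⟩

end Polynomial

lemma hasDepthAtLeast_of_isLocalization_atPrime {k σ A : Type*} [Field k] [Fintype σ]
    (m : Ideal (MvPolynomial σ k)) [m.IsMaximal] [CommRing A] [IsLocalRing A]
    [Algebra (MvPolynomial σ k) A] [IsLocalization.AtPrime A m] :
    HasDepthAtLeast A A (Fintype.card σ) := by
  obtain ⟨rs, hlen, hm, hreg⟩ := exists_isWeaklyRegular_of_isMaximal k σ m
  refine ⟨rs.map (algebraMap _ A), by simp [hlen], ?_,
    hreg.isRegular_of_isLocalization_of_mem A m hm⟩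
  rw [List.forall_mem_map]
  exact fun r hr ↦ (IsLocalization.AtPrime.to_map_mem_maximal_iff A m r).2 (hm r hr)

lemma finrank_quotient_span_range_pow {k σ : Type*} {A : Type u} [Field k] [Fintype σ]
    [CommRing A] [IsLocalRing A] [IsNoetherianRing A] [Algebra k A] {y : σ → A}
    (h : HasDepthAtLeast A A (Fintype.card σ)) (hy : ∀ i, y i ∈ maximalIdeal A)
    [Module.Finite k (A ⧸ Ideal.span (Set.range y))] {N : ℕ} (hN : N ≠ 0) :
    Module.finrank k (A ⧸ Ideal.span (Set.range (y ^ N))) =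
      N ^ Fintype.card σ * Module.finrank k (A ⧸ Ideal.span (Set.range y)) := by
  have hart : IsArtinianRing (A ⧸ Ideal.span (Set.range y)) := isArtinian_of_tower k inferInstance
  have hdim := Ring.krullDimLE_iff.1 (isArtinianRing_iff_krullDimLE_zero.1 hart)
  have hlen := length_quotient_span_range_pow k h hy hdim hN
  rw [Module.length_eq_finrank k (A ⧸ Ideal.span (Set.range y))] at hlen
  have hne : Module.length k (A ⧸ Ideal.span (Set.range (y ^ N))) ≠ ⊤ :=
    hlen ▸ by exact_mod_cast ENat.natCast_ne_top _
  have := (isFiniteLength_iff_isNoetherian_isArtinian.1 (Module.length_ne_top_iff.1 hne)).1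
  rw [Module.length_eq_finrank] at hlen
  exact_mod_cast hlen

section MvPolynomial

open MvPolynomial

/-- The ideal `(Xᵢ ^ N)ᵢ` of `MvPolynomial σ R`. -/
noncomputable abbrev varPowIdeal (R σ : Type*) [CommRing R] (N : ℕ) :
    Ideal (MvPolynomial σ R) :=
  Ideal.span (Set.range (X ^ N))

variable {R σ : Type*} [CommRing R]

lemma mem_varPowIdeal_iff {N : ℕ} {q : MvPolynomial σ R} :
    q ∈ varPowIdeal R σ N ↔ ∀ s ∈ q.support, ∃ i, N ≤ s i := by
  have hX : Set.range (X ^ N : σ → MvPolynomial σ R) =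
      (fun s ↦ monomial s (1 : R)) '' Set.range (Finsupp.single · N) := by
    rw [← Set.range_comp]
    exact congrArg Set.range (funext fun i ↦ X_pow_eq_monomial)
  rw [varPowIdeal, hX, mem_ideal_span_monomial_image]
  simp

variable (R σ) in
lemma exists_varPowIdeal_one_pow_le [Finite σ] (N : ℕ) :
    ∃ r : ℕ, varPowIdeal R σ 1 ^ r ≤ varPowIdeal R σ N := by
  refine Ideal.exists_pow_le_of_le_radical_of_fg (Ideal.span_le.2 ?_)
    (Submodule.fg_span (Set.finite_range _))
  rintro _ ⟨i, rfl⟩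
  exact ⟨N, Ideal.subset_span ⟨i, by simp⟩⟩

lemma eq_zero_of_forall_mem_varPowIdeal [Finite σ] {q : MvPolynomial σ R}
    (h : ∀ N ≠ 0, q ∈ varPowIdeal R σ N) : q = 0 := by
  have := Fintype.ofFinite σ
  by_contra hq
  obtain ⟨s, hs⟩ := support_nonempty.2 hq
  obtain ⟨i, hi⟩ := mem_varPowIdeal_iff.1 (h (∑ i, s i + 1) (by lia)) s hs
  have := Finset.single_le_sum (f := s) (fun _ _ ↦ Nat.zero_le _) (Finset.mem_univ i)
  lia

variable (R σ)

lemma span_range_monomial_quotient_varPowIdeal [Finite σ] (N : ℕ) :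
    Submodule.span R (Set.range fun t : σ → Fin N ↦ Ideal.Quotient.mk (varPowIdeal R σ N)
      (monomial (Finsupp.equivFunOnFinite.symm fun i ↦ (t i : ℕ)) (1 : R))) = ⊤ := by
  let π := (Ideal.Quotient.mkₐ R (varPowIdeal R σ N)).toLinearMap
  have hπ : Submodule.map π ⊤ = ⊤ :=
    Submodule.map_top π ▸ LinearMap.range_eq_top.2 (Ideal.Quotient.mkₐ_surjective R _)
  rw [eq_top_iff, ← hπ, ← (basisMonomials σ R).span_eq, Submodule.map_span_le]
  rintro _ ⟨s, rfl⟩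
  rw [coe_basisMonomials]
  by_cases hs : ∃ i, N ≤ s i
  · have hmem : monomial s (1 : R) ∈ varPowIdeal R σ N := mem_varPowIdeal_iff.2 fun s' hs' ↦
      Finset.mem_singleton.1 (support_monomial_subset hs') ▸ hs
    exact (Ideal.Quotient.eq_zero_iff_mem.2 hmem : π (monomial s 1) = 0) ▸ zero_mem _
  · push Not at hs
    refine Submodule.subset_span ⟨fun i ↦ ⟨s i, hs i⟩, ?_⟩
    exact congrArg (fun s ↦ π (monomial s 1)) (Finsupp.ext fun i ↦ rfl)

lemma finite_quotient_varPowIdeal [Finite σ] (N : ℕ) :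
    Module.Finite R (MvPolynomial σ R ⧸ varPowIdeal R σ N) :=
  ⟨span_range_monomial_quotient_varPowIdeal R σ N ▸ Submodule.fg_span (Set.finite_range _)⟩

lemma finrank_quotient_varPowIdeal_le [Fintype σ] [Nontrivial R] (N : ℕ) :
    Module.finrank R (MvPolynomial σ R ⧸ varPowIdeal R σ N) ≤ N ^ Fintype.card σ := by
  classical
  have hle := finrank_range_le_card (R := R) fun t : σ → Fin N ↦
    Ideal.Quotient.mk (varPowIdeal R σ N)
      (monomial (Finsupp.equivFunOnFinite.symm fun i ↦ (t i : ℕ)) (1 : R))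
  rw [Set.finrank, span_range_monomial_quotient_varPowIdeal, finrank_top] at hle
  simpa using hle

end MvPolynomial

section Trace

lemma card_mul_eq_zero_of_commutator_eq_smul {S Q ι : Type*} [CommRing S] [AddCommGroup Q]
    [Module S Q] [Fintype ι] (b : Module.Basis ι S Q) {T₁ T₂ : Module.End S Q} {c : S}
    (h : T₁ * T₂ - T₂ * T₁ = c • 1) : Fintype.card ι * c = 0 := by
  classical
  have htr := congrArg (LinearMap.trace S Q) h
  rw [map_sub, LinearMap.trace_mul_comm, sub_self, map_smul, LinearMap.trace_eq_matrix_trace S b,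
    LinearMap.toMatrix_one, Matrix.trace_one, smul_eq_mul, mul_comm] at htr
  exact htr.symm

lemma linearIndependent_of_top_le_span_of_finrank_le (k : Type*) {S Q ι : Type*} [Field k]
    [CommRing S] [Algebra k S] [Module.Finite k S] [AddCommGroup Q] [Module k Q] [Module S Q]
    [IsScalarTower k S Q] [Fintype ι] {e : ι → Q} (he : ⊤ ≤ Submodule.span S (Set.range e))
    (hcard : Module.finrank k S * Fintype.card ι ≤ Module.finrank k Q) :
    LinearIndependent S e := by
  let L : (ι → S) →ₗ[k] Q := (Fintype.linearCombination S e).restrictScalars k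
  have hL : Function.Surjective L := by
    rw [← LinearMap.range_eq_top, ← top_le_iff]
    exact fun q hq ↦ (Fintype.range_linearCombination S e).ge (he hq)
  have : Module.Finite k Q := .of_surjective L hL
  have hrank : Module.finrank k (ι → S) = Module.finrank k Q := by
    refine (le_of_eq_of_le ?_ hcard).antisymm (LinearMap.finrank_le_finrank_of_surjective hL)
    rw [Module.finrank_pi_fintype, Finset.sum_const, smul_eq_mul, Finset.card_univ, mul_comm]
  exact linearIndependent_iff_injective_fintypeLinearCombination.2 <|
    (LinearMap.injective_iff_surjective_of_finrank_eq_finrank hrank).2 hL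

lemma sup_pow_smul_top_eq_top {P M : Type*} [CommRing P] [AddCommGroup M] [Module P M]
    {N : Submodule P M} {I : Ideal P} (h : N ⊔ I • ⊤ = ⊤) (r : ℕ) :
    N ⊔ I ^ r • (⊤ : Submodule P M) = ⊤ := by
  induction r with
  | zero => simp
  | succ r ih =>
    refine top_le_iff.1 (ih.ge.trans (sup_le le_sup_left ?_))
    calc I ^ r • (⊤ : Submodule P M)
      _ = I ^ r • N ⊔ I ^ (r + 1) • ⊤ := by
        rw [pow_succ, Submodule.mul_smul, ← Submodule.smul_sup, h]
      _ ≤ N ⊔ I ^ (r + 1) • ⊤ := sup_le_sup_right Submodule.smul_le_right _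

lemma card_mul_mem_of_commutator_eq_smul {P M ι : Type*} [CommRing P] [AddCommGroup M]
    [Module P M] [Fintype ι] {K : Ideal P}
    (b : Module.Basis ι (P ⧸ K) (M ⧸ K • (⊤ : Submodule P M)))
    {T₁ T₂ : Module.End P M} {g : P} (h : T₁ * T₂ - T₂ * T₁ = g • 1) :
    Fintype.card ι * g ∈ K := by
  let T' (T : Module.End P M) : Module.End (P ⧸ K) (M ⧸ K • (⊤ : Submodule P M)) :=
    LinearMap.extendScalarsOfSurjective Ideal.Quotient.mk_surjective
      (Submodule.mapQ _ _ T (Submodule.smul_top_le_comap_smul_top K T))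
  have hT' : T' T₁ * T' T₂ - T' T₂ * T' T₁ = Ideal.Quotient.mk K g • 1 := by
    refine LinearMap.ext fun x ↦ ?_
    obtain ⟨x, rfl⟩ := Submodule.mkQ_surjective _ x
    exact congrArg (Submodule.mkQ (K • ⊤)) (LinearMap.congr_fun h x)
  rw [← Ideal.Quotient.eq_zero_iff_mem, map_mul, map_natCast]
  exact card_mul_eq_zero_of_commutator_eq_smul b hT'

section VarPowQuotient

variable {k σ M : Type*} [Field k] [Fintype σ] [AddCommGroup M] [Module (MvPolynomial σ k) M]

/-- The quotient `M / (Xᵢ ^ N)ᵢ M` of a module `M` over `MvPolynomial σ k`. -/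
abbrev VarPowQuotient (k σ M : Type*) [CommRing k] [AddCommGroup M]
    [Module (MvPolynomial σ k) M] (N : ℕ) : Type _ :=
  M ⧸ varPowIdeal k σ N • (⊤ : Submodule (MvPolynomial σ k) M)

variable [Module k M] [IsScalarTower k (MvPolynomial σ k) M]

-- By Nakayama, lifts of a `k`-basis of `M / (X) M` generate `M / (X ^ N) M`; the dimension count
-- makes them a basis.
lemma nonempty_basis_varPowQuotient [Module.Finite k (VarPowQuotient k σ M 1)] {N : ℕ}
    (hrank : N ^ Fintype.card σ * Module.finrank k (VarPowQuotient k σ M 1) ≤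
      Module.finrank k (VarPowQuotient k σ M N)) :
    Nonempty (Module.Basis (Fin (Module.finrank k (VarPowQuotient k σ M 1)))
      (MvPolynomial σ k ⧸ varPowIdeal k σ N) (VarPowQuotient k σ M N)) := by
  let P := MvPolynomial σ k
  let I := varPowIdeal k σ
  choose v hv using fun i ↦ Submodule.mkQ_surjective (I 1 • (⊤ : Submodule P M))
    (Module.finBasis k (VarPowQuotient k σ M 1) i)
  have hspan : Submodule.span P (Set.range v) ⊔ I 1 • ⊤ = ⊤ := by
    rw [sup_comm, ← Submodule.map_mkQ_eq_top, Submodule.map_span, ← Set.range_comp]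
    refine Submodule.span_eq_top_of_span_eq_top k P _ ?_
    rw [show _ ∘ v = _ from funext hv, Module.Basis.span_eq]
  obtain ⟨r, hr⟩ := exists_varPowIdeal_one_pow_le k σ N
  have hspanN : Submodule.span P (Set.range v) ⊔ I N • ⊤ = ⊤ :=
    top_le_iff.1 ((sup_pow_smul_top_eq_top hspan r).ge.trans
      (sup_le_sup_left (Submodule.smul_mono_left hr) _))
  let π := Submodule.mkQ (I N • (⊤ : Submodule P M))
  have he : Submodule.span (P ⧸ I N) (Set.range (π ∘ v)) = ⊤ := by
    refine Submodule.span_eq_top_of_span_eq_top P (P ⧸ I N) _ ?_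
    rwa [Set.range_comp, ← Submodule.map_span, Submodule.map_mkQ_eq_top, sup_comm]
  have := finite_quotient_varPowIdeal k σ N
  refine ⟨.mk
    (linearIndependent_of_top_le_span_of_finrank_le k he.ge (le_trans ?_ hrank)) he.ge⟩
  rw [Fintype.card_fin]
  exact Nat.mul_le_mul_right _ (finrank_quotient_varPowIdeal_le k σ N)

lemma eq_zero_of_commutator_eq_smul [Module.Finite k (VarPowQuotient k σ M 1)]
    (hrank : ∀ N ≠ 0, N ^ Fintype.card σ * Module.finrank k (VarPowQuotient k σ M 1) ≤
      Module.finrank k (VarPowQuotient k σ M N))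
    (hne : (Module.finrank k (VarPowQuotient k σ M 1) : k) ≠ 0)
    {T₁ T₂ : Module.End (MvPolynomial σ k) M} {g : MvPolynomial σ k}
    (h : T₁ * T₂ - T₂ * T₁ = g • 1) : g = 0 := by
  refine eq_zero_of_forall_mem_varPowIdeal fun N hN ↦ ?_
  obtain ⟨b⟩ := nonempty_basis_varPowQuotient (hrank N hN)
  have hmem := card_mul_mem_of_commutator_eq_smul b h
  rwa [Fintype.card_fin, ← map_natCast (MvPolynomial.C (σ := σ) (R := k)),
    Ideal.unit_mul_mem_iff_mem _ (hne.isUnit.map _)] at hmem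

end VarPowQuotient

section LocalAlgebra

/-- If `A` is an algebra over `MvPolynomial σ k` with structure map `Xᵢ ↦ yᵢ`, then
`A / (Xᵢ ^ N)ᵢ A` is `A / (yᵢ ^ N)ᵢ`. -/
noncomputable def varPowQuotientEquiv {k σ A : Type*} [CommRing k] [CommRing A] [Algebra k A]
    [Algebra (MvPolynomial σ k) A] [IsScalarTower k (MvPolynomial σ k) A] {y : σ → A}
    (hy : ∀ i, algebraMap (MvPolynomial σ k) A (MvPolynomial.X i) = y i) (N : ℕ) :
    VarPowQuotient k σ A N ≃ₗ[k] A ⧸ Ideal.span (Set.range (y ^ N)) :=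
  have hmap : varPowIdeal k σ N • (⊤ : Submodule (MvPolynomial σ k) A) =
      (Ideal.span (Set.range (y ^ N))).restrictScalars (MvPolynomial σ k) := by
    rw [Ideal.smul_top_eq_map, Ideal.map_span, ← Set.range_comp]
    congr 3
    exact funext fun i ↦ by simp [hy]
  (Submodule.quotEquivOfEq _ _ hmap ≪≫ₗ
    Submodule.Quotient.restrictScalarsEquiv (MvPolynomial σ k) _).restrictScalars k

lemma derivation_aeval_mul {k σ A : Type*} [CommRing k] [CommRing A] [Algebra k A] {y : σ → A}
    {D : Derivation k A A} (hD : ∀ i, D (y i) = 0) (p : MvPolynomial σ k) (b : A) :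
    D (MvPolynomial.aeval y p * b) = MvPolynomial.aeval y p * D b := by
  have hp : MvPolynomial.aeval y p ∈ Algebra.adjoin k (Set.range y) :=
    Algebra.adjoin_range_eq_range_aeval k y ▸ AlgHom.mem_range_self _ p
  have hDp : D (MvPolynomial.aeval y p) = 0 :=
    Derivation.eqOn_adjoin (D2 := 0) (Set.forall_mem_range.2 hD) hp
  rw [D.leibniz, hDp, smul_zero, add_zero, smul_eq_mul]

lemma eq_zero_of_mul_derivation_eq_aeval {k σ : Type*} {A : Type u} [Field k] [Fintype σ]
    [CommRing A] [IsLocalRing A] [IsNoetherianRing A] [Algebra k A] {y : σ → A}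
    (h : HasDepthAtLeast A A (Fintype.card σ)) (hy : ∀ i, y i ∈ maximalIdeal A)
    [Module.Finite k (A ⧸ Ideal.span (Set.range y))]
    (hne : (Module.finrank k (A ⧸ Ideal.span (Set.range y)) : k) ≠ 0) {D : Derivation k A A}
    (hD : ∀ i, D (y i) = 0) {a c : A} {g : MvPolynomial σ k}
    (hg : c * D a = MvPolynomial.aeval y g) : g = 0 := by
  let : Algebra (MvPolynomial σ k) A := (MvPolynomial.aeval y).toAlgebra
  have : IsScalarTower k (MvPolynomial σ k) A :=
    .of_algebraMap_eq' (MvPolynomial.aeval y).comp_algebraMap.symm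
  let e (N : ℕ) := varPowQuotientEquiv (k := k) (y := y) (MvPolynomial.aeval_X y) N
  have e₁ : VarPowQuotient k σ A 1 ≃ₗ[k] A ⧸ Ideal.span (Set.range y) :=
    e 1 ≪≫ₗ (Ideal.quotientEquivAlgOfEq k (by rw [pow_one])).toLinearEquiv
  have : Module.Finite k (VarPowQuotient k σ A 1) := .equiv e₁.symm
  let T₁ : Module.End (MvPolynomial σ k) A :=
    { toFun b := c * D b
      map_add' b b' := by rw [map_add, mul_add]
      map_smul' p b := by
        change c * D (MvPolynomial.aeval y p * b) = MvPolynomial.aeval y p * (c * D b)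
        rw [derivation_aeval_mul hD, mul_left_comm] }
  refine eq_zero_of_commutator_eq_smul (T₁ := T₁)
    (T₂ := LinearMap.mulLeft (MvPolynomial σ k) a) (fun N hN ↦ ?_) (e₁.finrank_eq ▸ hne) ?_
  · rw [(e N).finrank_eq, e₁.finrank_eq, finrank_quotient_span_range_pow h hy hN]
  · refine LinearMap.ext fun b ↦ ?_
    change c * D (a * b) - a * (c * D b) = MvPolynomial.aeval y g * b
    rw [← hg, D.leibniz, smul_eq_mul, smul_eq_mul]
    ring

end LocalAlgebra

end Trace

section Derivation

open MvPolynomial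

lemma exists_derivation_algebraMap_of_isLocalization {k B A : Type*} [CommRing k] [CommRing B]
    [CommRing A] [Algebra k B] [Algebra B A] [Algebra k A] [IsScalarTower k B A]
    (S : Submonoid B) [IsLocalization S A] (d : Derivation k B B) :
    ∃ D : Derivation k A A, ∀ b, D (algebraMap B A b) = algebraMap B A (d b) := by
  have := Algebra.FormallyEtale.of_isLocalization (Rₘ := A) S
  let ℓ := (Algebra.linearMap B A ∘ₗ d.liftKaehlerDifferential).liftBaseChange A
  let e := KaehlerDifferential.tensorKaehlerEquivOfFormallyEtale k B A
  refine ⟨(ℓ ∘ₗ e.symm.toLinearMap).compDer (KaehlerDifferential.D k A), fun b ↦ ?_⟩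
  change ℓ (e.symm (KaehlerDifferential.D k A (algebraMap B A b))) = _
  rw [KaehlerDifferential.tensorKaehlerEquivOfFormallyEtale_symm_D_algebraMap]
  simp [ℓ]

variable {R σ : Type*} [CommRing R]

lemma pderiv_pderiv_comm (i j : σ) (f : MvPolynomial σ R) :
    pderiv i (pderiv j f) = pderiv j (pderiv i f) := by
  classical
  have h : ⁅pderiv (R := R) i, pderiv j⁆ = 0 := derivation_ext fun l ↦ by
    rw [Derivation.commutator_apply, pderiv_X, pderiv_X, Pi.single_apply, Pi.single_apply]
    split_ifs <;> simp
  rw [← sub_eq_zero, ← Derivation.commutator_apply, h, Derivation.zero_apply]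

lemma pderiv_pderiv_self [CharP R 2] (i : σ) (f : MvPolynomial σ R) :
    pderiv i (pderiv i f) = 0 := by
  classical
  induction f using MvPolynomial.induction_on' with
  | monomial s c =>
    have hdvd : ((s i * (s i - 1) : ℕ) : R) = 0 :=
      (CharP.cast_eq_zero_iff R 2 _).2 (Nat.even_mul_pred_self _).two_dvd
    rw [pderiv_monomial, pderiv_monomial, Finsupp.tsub_apply, Finsupp.single_eq_same, mul_assoc,
      ← Nat.cast_mul, hdvd, mul_zero, monomial_zero]
  | add p q hp hq => rw [map_add, map_add, hp, hq, add_zero]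

variable [Fintype σ]

lemma mkDerivation_eq_sum_pderiv_mul (v : σ → MvPolynomial σ R) (g : MvPolynomial σ R) :
    mkDerivation R v g = ∑ l, pderiv l g * v l := by
  classical
  have hsum (g : MvPolynomial σ R) : (∑ l, v l • pderiv (R := R) l) g = ∑ l, pderiv l g * v l := by
    rw [← Derivation.coeFnAddMonoidHom_apply, map_sum, Finset.sum_apply]
    simp [mul_comm]
  rw [← hsum]
  congr 1
  refine derivation_ext fun i ↦ ?_
  simp [hsum, pderiv_X, Pi.single_apply]

/-- The Jacobian matrix `(∂yᵢ/∂Xⱼ)ᵢⱼ` of as many polynomials as there are variables. -/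
noncomputable def jacobianMatrix (y : σ → MvPolynomial σ R) : Matrix σ σ (MvPolynomial σ R) :=
  .of fun i j ↦ pderiv j (y i)

lemma jacobianMatrix_mulVec (y v : σ → MvPolynomial σ R) :
    (jacobianMatrix y).mulVec v = fun i ↦ mkDerivation R v (y i) :=
  funext fun i ↦ (mkDerivation_eq_sum_pderiv_mul v (y i)).symm

lemma det_eq_zero_of_transpose_eq_neg_of_odd_card [DecidableEq σ] (hσ : Odd (Fintype.card σ))
    {H : Matrix σ σ R} (hH : H.transpose = -H) (hdiag : ∀ i, H i i = 0) : H.det = 0 := by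
  have hinv (π : Equiv.Perm σ) : ∏ i, H (π⁻¹ i) i = -∏ i, H (π i) i := by
    calc ∏ i, H (π⁻¹ i) i = ∏ i, H i (π i) :=
          (Equiv.prod_comp π fun i ↦ H (π⁻¹ i) i).symm.trans (by simp)
      _ = ∏ i, -H (π i) i := Finset.prod_congr rfl fun i _ ↦ congrFun₂ hH (π i) i
      _ = -∏ i, H (π i) i := by rw [Finset.prod_neg, Finset.card_univ, hσ.neg_one_pow, neg_one_mul]
  rw [Matrix.det_apply']
  refine Finset.sum_involution (fun π _ ↦ π⁻¹) (fun π _ ↦ ?_) (fun π _ hπ hππ ↦ hπ ?_)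
    (fun _ _ ↦ Finset.mem_univ _) (fun π _ ↦ inv_inv π)
  · rw [hinv, Equiv.Perm.sign_inv, mul_neg, add_neg_cancel]
  · obtain ⟨i, hi⟩ := Equiv.Perm.exists_fixed_point_of_prime (p := 2) (n := 1) (σ := π)
      hσ.not_two_dvd_nat (by rw [pow_one, sq, ← inv_eq_iff_mul_eq_one, hππ])
    rw [Finset.prod_eq_zero (Finset.mem_univ i) (by rw [hi, hdiag]), mul_zero]

lemma det_jacobianMatrix_pderiv_eq_zero [DecidableEq σ] [CharP R 2] (hσ : Odd (Fintype.card σ))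
    (f : MvPolynomial σ R) : (jacobianMatrix fun i ↦ pderiv i f).det = 0 :=
  det_eq_zero_of_transpose_eq_neg_of_odd_card hσ
    (Matrix.ext fun i j ↦ (pderiv_pderiv_comm i j f).trans (CharTwo.neg_eq _).symm)
    fun i ↦ pderiv_pderiv_self i f

end Derivation

section Milnor

open MvPolynomial

lemma exists_ne_zero_aeval_eq_mul {k σ : Type*} [CommRing k] [IsDomain k] [Finite σ]
    {y : σ → MvPolynomial σ k}
    (hy : AlgebraicIndependent k y) {b : MvPolynomial σ k} (hb : b ≠ 0) :
    ∃ g : MvPolynomial σ k, g ≠ 0 ∧ ∃ c, aeval y g = b * c := by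
  have hbasis : IsTranscendenceBasis k y :=
    hy.isTranscendenceBasis_of_lift_trdeg_le_of_finite (by simp [MvPolynomial.trdeg_of_isDomain])
  obtain ⟨⟨r, hr⟩, hr0, c, hc⟩ := (hbasis.isAlgebraic.isAlgebraic b).exists_nonzero_dvd
    (mem_nonZeroDivisors_of_ne_zero hb)
  rw [Algebra.adjoin_range_eq_range_aeval] at hr
  obtain ⟨g, rfl⟩ := hr
  refine ⟨g, ?_, c, hc⟩
  rintro rfl
  exact hr0 (Subtype.ext (map_zero _))

variable {k σ : Type*} [Field k] (A : Type u) [CommRing A]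
  [Algebra (MvPolynomial σ k) A] [Algebra k A] [IsScalarTower k (MvPolynomial σ k) A]
  {y : σ → MvPolynomial σ k}

lemma eq_zero_of_mul_derivation_eq_aeval_of_isLocalization_atPrime [Finite σ]
    (m : Ideal (MvPolynomial σ k)) [m.IsMaximal] [IsLocalization.AtPrime A m] (hy : ∀ i, y i ∈ m)
    [Module.Finite k (A ⧸ Ideal.span (Set.range fun i ↦ algebraMap _ A (y i)))]
    (hne : (Module.finrank k (A ⧸ Ideal.span (Set.range fun i ↦ algebraMap _ A (y i))) : k) ≠ 0)
    {d : Derivation k (MvPolynomial σ k) (MvPolynomial σ k)} (hd : ∀ i, d (y i) = 0)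
    {a c g : MvPolynomial σ k} (hg : c * d a = aeval y g) : g = 0 := by
  have := Fintype.ofFinite σ
  have : IsLocalRing A := IsLocalization.AtPrime.isLocalRing A m
  have : IsNoetherianRing A := IsLocalization.isNoetherianRing m.primeCompl A inferInstance
  obtain ⟨D, hD⟩ := exists_derivation_algebraMap_of_isLocalization (A := A) m.primeCompl d
  refine eq_zero_of_mul_derivation_eq_aeval (hasDepthAtLeast_of_isLocalization_atPrime m)
    (fun i ↦ (IsLocalization.AtPrime.to_map_mem_maximal_iff A m (y i)).2 (hy i)) hne (D := D)
    (fun i ↦ by rw [hD, hd, map_zero]) (a := algebraMap _ A a) (c := algebraMap _ A c) ?_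
  rw [hD, ← map_mul, hg]
  exact (aeval_algebraMap_apply A y g).symm

theorem natCast_finrank_quotient_eq_zero_of_det_jacobianMatrix_eq_zero [Fintype σ] [DecidableEq σ]
    (m : Ideal (MvPolynomial σ k)) [m.IsMaximal] [IsLocalization.AtPrime A m]
    (hdet : (jacobianMatrix y).det = 0)
    [Module.Finite k (A ⧸ Ideal.span (Set.range fun i ↦ algebraMap _ A (y i)))] :
    (Module.finrank k (A ⧸ Ideal.span (Set.range fun i ↦ algebraMap _ A (y i))) : k) = 0 := by
  by_cases hy : ∀ i, y i ∈ m
  · by_contra hne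
    have hind : AlgebraicIndependent k y := algebraicIndependent_iff.2 fun g hg ↦
      eq_zero_of_mul_derivation_eq_aeval_of_isLocalization_atPrime A m hy hne (d := 0)
        (fun _ ↦ rfl) (a := 0) (c := 0) (by rw [hg, zero_mul])
    obtain ⟨v, hv, hJv⟩ := Matrix.exists_mulVec_eq_zero_iff.2 hdet
    obtain ⟨j, hj⟩ := Function.ne_iff.1 hv
    obtain ⟨g, hg, c, hgc⟩ := exists_ne_zero_aeval_eq_mul hind hj
    rw [jacobianMatrix_mulVec] at hJv
    exact hg <| eq_zero_of_mul_derivation_eq_aeval_of_isLocalization_atPrime A m hy hne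
      (congrFun hJv) (a := X j) (c := c) (by rw [mkDerivation_X, hgc, mul_comm])
  · obtain ⟨i, hi⟩ := not_forall.1 hy
    have hunit := IsLocalization.map_units A (⟨y i, hi⟩ : m.primeCompl)
    have : Subsingleton (A ⧸ Ideal.span (Set.range fun i ↦ algebraMap _ A (y i))) :=
      Ideal.Quotient.subsingleton_iff.2
        (Ideal.eq_top_of_isUnit_mem _ (Ideal.subset_span ⟨i, rfl⟩) hunit)
    rw [Module.finrank_zero_of_subsingleton, Nat.cast_zero]

theorem milnor_number_even_of_odd_dim_char_two_general [CharP k 2] [Fintype σ]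
    (m : Ideal (MvPolynomial σ k)) [m.IsMaximal] [IsLocalization.AtPrime A m]
    (hσ : Odd (Fintype.card σ)) (f : MvPolynomial σ k)
    [Module.Finite k (A ⧸ (Ideal.span (Set.range fun i ↦ pderiv i f)).map (algebraMap _ A))] :
    Even (Module.finrank k
      (A ⧸ (Ideal.span (Set.range fun i ↦ pderiv i f)).map (algebraMap _ A))) := by
  classical
  have hspan : (Ideal.span (Set.range fun i ↦ pderiv i f)).map (algebraMap _ A) =
      Ideal.span (Set.range fun i ↦ algebraMap _ A (pderiv i f)) := by
    rw [Ideal.map_span, ← Set.range_comp, Function.comp_def]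
  have : Module.Finite k (A ⧸ Ideal.span (Set.range fun i ↦ algebraMap _ A (pderiv i f))) :=
    hspan ▸ ‹_›
  rw [even_iff_two_dvd, ← CharP.cast_eq_zero_iff k 2, hspan]
  exact natCast_finrank_quotient_eq_zero_of_det_jacobianMatrix_eq_zero A m
    (det_jacobianMatrix_pderiv_eq_zero hσ f)

end Milnor

/-- **Proposition 3.21.** Let `k` be a perfect field of characteristic `2` and `n` an odd
positive integer.  Let `f ∈ k[X₁,…,Xₙ]`, let `J(f)` be its Jacobian ideal (generated by the
partial derivatives of `f`), and let `m ⊇ J(f)` be a maximal ideal such that the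
localization at `m` of `k[X₁,…,Xₙ]/J(f)` is a nonzero finite-dimensional `k`-vector space
(so the corresponding closed point is an isolated singular point of `f : 𝔸ⁿ → 𝔸¹`).  Then
the Milnor number — the `k`-dimension of this localization — is even. -/
theorem milnor_number_even_of_odd_dim_char_two
    (k : Type u) [Field k] [CharP k 2] [PerfectRing k 2]
    (n : ℕ) (hn : Odd n) (hnpos : 0 < n)
    (f : MvPolynomial (Fin n) k)
    (J : Ideal (MvPolynomial (Fin n) k))
    (hJ : J = Ideal.span (Set.range fun i => MvPolynomial.pderiv i f))
    (m : Ideal (MvPolynomial (Fin n) k)) [m.IsMaximal] (hJm : J ≤ m)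
    -- `A` is the localization of `k[X₁,…,Xₙ]` at the maximal ideal `m`:
    (A : Type u) [CommRing A] [Algebra (MvPolynomial (Fin n) k) A]
    [IsLocalization.AtPrime A m]
    [Algebra k A] [IsScalarTower k (MvPolynomial (Fin n) k) A]
    -- `I` is the ideal of `A` generated by `J(f)`, so `A ⧸ I` is the localization of
    -- `k[X₁,…,Xₙ]/J(f)` at `m`:
    (I : Ideal A) (hI : I = J.map (algebraMap (MvPolynomial (Fin n) k) A))
    (hne : Nontrivial (A ⧸ I)) (hfd : FiniteDimensional k (A ⧸ I)) :
    Even (Module.finrank k (A ⧸ I)) := by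
  subst hJ hI
  exact milnor_number_even_of_odd_dim_char_two_general A m (by simpa using hn) f
end
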